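/- arXiv:0811.1416 — 2 statements merged into one kernel-verified Lean document; each statement's English description precedes it below -/
import Mathlib

section
/- Let q ≥ 1 be an integer, α > 0, and let B^q be the closed unit ball in ℝ^q. Let F : B^q → ℝ^q be a continuous map of the form F(x) = A(x) + G(x), where A : ℝ^q → ℝ^q is linear with ‖A(x)‖ ≥ α·‖x‖ for all x, and ‖G(x)‖ ≤ α·‖x‖/2 for all x ∈ B^q. Then the image F(B^q) contains the closed ball of radius α/2 centered at the origin. -/
open MeasureTheory Finset
open scoped RealInnerProductSpace

noncomputable section
attribute [local instance] Classical.propDecidable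

/-- Euclidean space `ℝ^{d+1}`. -/
abbrev Euc (d : ℕ) := EuclideanSpace ℝ (Fin (d + 1))

/-- The unit sphere `S^d ⊆ ℝ^{d+1}`. -/
abbrev Sph (d : ℕ) := Metric.sphere (0 : Euc d) 1

/-- Real-valued functions on the sphere. -/
abbrev SphFun (d : ℕ) := Sph d → ℝ

/-- The normalized surface measure `μ_d` on `S^d`. -/
noncomputable def muSph (d : ℕ) : Measure (Sph d) :=
  ((volume : Measure (Euc d)).toSphere Set.univ)⁻¹ • (volume : Measure (Euc d)).toSphere

/-- Gegenbauer polynomials `C_k^α`, normalized so that `C_k^α(1) = binom(2α+k-1, k)`,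
defined by the standard three-term recurrence. -/
noncomputable def gegenbauer (α : ℝ) : ℕ → Polynomial ℝ
  | 0 => 1
  | 1 => Polynomial.C (2 * α) * Polynomial.X
  | n + 2 =>
      Polynomial.C (2 * ((n : ℝ) + 1 + α) / ((n : ℝ) + 2)) *
          (Polynomial.X * gegenbauer α (n + 1)) -
        Polynomial.C (((n : ℝ) + 2 * α) / ((n : ℝ) + 2)) * gegenbauer α n

/-- `dim H_k = ((2k+d-1)/(k+d-1))·binom(d+k-1, k)`. -/
noncomputable def dimHarm (d k : ℕ) : ℝ :=
  ((2 * (k : ℝ) + d - 1) / ((k : ℝ) + d - 1)) * (Nat.choose (d + k - 1) k : ℝ)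

/-- The kernel polynomial `g_w(t) = Σ_{k=1}^n dim H_k / (w_k G_k^α(1)) · G_k^α(t)`,
with `α = (d-1)/2` and `w_k = k(k+d-1)`. -/
noncomputable def gw (d n : ℕ) : Polynomial ℝ :=
  ∑ k ∈ Finset.Icc 1 n,
    Polynomial.C (dimHarm d k /
        (((k : ℝ) * ((k : ℝ) + d - 1)) * (gegenbauer (((d : ℝ) - 1) / 2) k).eval 1)) *
      gegenbauer (((d : ℝ) - 1) / 2) k

/-- The Laplace operator on polynomials in `d+1` variables. -/
noncomputable def polyLaplacian (d : ℕ) (p : MvPolynomial (Fin (d + 1)) ℝ) :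
    MvPolynomial (Fin (d + 1)) ℝ :=
  ∑ i : Fin (d + 1), MvPolynomial.pderiv i (MvPolynomial.pderiv i p)

/-- The space `H_k` of spherical harmonics of degree `k` on `S^d`: restrictions to the
sphere of harmonic homogeneous polynomials of degree `k`. -/
def sphHarmonic (d k : ℕ) : Set (SphFun d) :=
  {f | ∃ p : MvPolynomial (Fin (d + 1)) ℝ, p.IsHomogeneous k ∧ polyLaplacian d p = 0 ∧
        ∀ x : Sph d, f x = MvPolynomial.eval (fun i => (x : Euc d) i) p}

/-- The space `P_n`: restrictions to `S^d` of polynomials of total degree at most `n`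
having zero mean over the sphere. -/
def PolySph (d n : ℕ) : Set (SphFun d) :=
  {f | ∃ p : MvPolynomial (Fin (d + 1)) ℝ, p.totalDegree ≤ n ∧
        (∀ x : Sph d, f x = MvPolynomial.eval (fun i => (x : Euc d) i) p) ∧
        ∫ x, f x ∂muSph d = 0}

/-- The `H_k`-component of `P ∈ P_n` in the decomposition `P_n = ⊕_{k=1}^n H_k`
(the decomposition is unique; an arbitrary one is chosen if it exists). -/
noncomputable def harmComponent (d n : ℕ) (P : SphFun d) (k : ℕ) : SphFun d :=
  if h : ∃ c : ℕ → SphFun d, (∀ j, c j ∈ sphHarmonic d j) ∧ P = ∑ j ∈ Finset.Icc 1 n, c j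
  then h.choose k else 0

/-- The inner product `⟨P,Q⟩_w = Σ_{k=1}^n w_k ∫ P_k Q_k dμ_d` with `w_k = k(k+d-1)`. -/
noncomputable def innerW (d n : ℕ) (P Q : SphFun d) : ℝ :=
  ∑ k ∈ Finset.Icc 1 n, ((k : ℝ) * ((k : ℝ) + d - 1)) *
    ∫ x, harmComponent d n P k x * harmComponent d n Q k x ∂muSph d

/-- The norm `‖P‖_w = ⟨P,P⟩_w^{1/2}`. -/
noncomputable def normW (d n : ℕ) (P : SphFun d) : ℝ :=
  Real.sqrt (innerW d n P P)

/-- The function `G_x(y) = g_w((x,y))` on the sphere, for `x ∈ ℝ^{d+1}`. -/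
noncomputable def GxFun (d n : ℕ) (x : Euc d) : SphFun d :=
  fun y => (gw d n).eval ⟪x, (y : Euc d)⟫

/-- The extension of a function on the sphere to `ℝ^{d+1} \ {0}` by `x ↦ f(x/‖x‖)`
(with value `0` at the origin). -/
noncomputable def extendSph (d : ℕ) (f : SphFun d) : Euc d → ℝ :=
  fun x =>
    if hx : x = 0 then 0
    else f ⟨‖x‖⁻¹ • x, by
      rw [mem_sphere_zero_iff_norm, norm_smul, norm_inv, norm_norm,
        inv_mul_cancel₀ (norm_ne_zero_iff.mpr hx)]⟩

/-- The spherical gradient `∇f(x) = (∂/∂x) f(x/‖x‖)`. -/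
noncomputable def sphGrad (d : ℕ) (f : SphFun d) (x : Euc d) : Euc d :=
  gradient (extendSph d f) x

/-- The spherical Hessian quadratic form `∇²f(x)·y·y`. -/
noncomputable def sphHessApply (d : ℕ) (f : SphFun d) (x y : Euc d) : ℝ :=
  iteratedFDeriv ℝ 2 (extendSph d f) x ![y, y]

/-- `‖∇²f(x₀)‖ = max { |∇²f(x₀)·y·y| : ‖y‖ = 1, (y,x₀) = 0 }`. -/
noncomputable def sphHessNorm (d : ℕ) (f : SphFun d) (x₀ : Sph d) : ℝ :=
  sSup {r : ℝ | ∃ y : Euc d, ‖y‖ = 1 ∧ ⟪y, (x₀ : Euc d)⟫ = 0 ∧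
    r = |sphHessApply d f (x₀ : Euc d) y|}

/-- `x_1, …, x_N ∈ S^d` form a spherical `n`-design. -/
def IsSphericalDesign (d n N : ℕ) (x : Fin N → Sph d) : Prop :=
  ∀ p : MvPolynomial (Fin (d + 1)) ℝ, p.totalDegree ≤ n →
    ∫ y, MvPolynomial.eval (fun j => (y : Euc d) j) p ∂muSph d =
      (N : ℝ)⁻¹ * ∑ i, MvPolynomial.eval (fun j => ((x i : Euc d)) j) p

/-- An area-regular partition `R_1, …, R_N` of `S^d`: closed sets with pairwise disjoint
interiors, covering the sphere, each of normalized measure `1/N`. -/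
def IsAreaRegularPartition (d N : ℕ) (R : Fin N → Set (Sph d)) : Prop :=
  (∀ i, IsClosed (R i)) ∧ (⋃ i, R i) = Set.univ ∧
    (∀ i j, i ≠ j → interior (R i) ∩ interior (R j) = ∅) ∧
    ∀ i, muSph d (R i) = 1 / N

/-- The Marcinkiewicz–Zygmund property of degree `m` for points `x_1, …, x_N ∈ S^d`. -/
def MZProperty (d m N : ℕ) (x : Fin N → Sph d) : Prop :=
  ∀ p : MvPolynomial (Fin (d + 1)) ℝ, p.totalDegree ≤ m →
    (1 / 2) * (∫ y, |MvPolynomial.eval (fun j => (y : Euc d) j) p| ∂muSph d) ≤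
        (N : ℝ)⁻¹ * ∑ i, |MvPolynomial.eval (fun j => ((x i : Euc d)) j) p| ∧
      (N : ℝ)⁻¹ * ∑ i, |MvPolynomial.eval (fun j => ((x i : Euc d)) j) p| ≤
        (3 / 2) * ∫ y, |MvPolynomial.eval (fun j => (y : Euc d) j) p| ∂muSph d

/-- The point `x_i(P)`: move `x` along the great circle in the direction of the spherical
gradient `∇P(x)` through angle `‖∇P(x)‖`. -/
noncomputable def movePoint (d : ℕ) (P : SphFun d) (x : Sph d) : Euc d :=
  if _h : sphGrad d P (x : Euc d) = 0 then (x : Euc d)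
  else Real.cos ‖sphGrad d P (x : Euc d)‖ • (x : Euc d) +
    Real.sin ‖sphGrad d P (x : Euc d)‖ • (‖sphGrad d P (x : Euc d)‖⁻¹ • sphGrad d P (x : Euc d))

/-- The map `L(P) = (1/N) Σ_i G_{x_i(P)}`. -/
noncomputable def Lmap (d n N : ℕ) (x : Fin N → Sph d) (P : SphFun d) : SphFun d :=
  (N : ℝ)⁻¹ • ∑ i, GxFun d n (movePoint d P (x i))

end

/-!
The linear map `A` is invertible, so `F x = y` is the fixed point equation `x = A⁻¹ (y - G x)`; for
`‖y‖ ≤ α / 2` its right-hand side maps the unit ball to itself, and Brouwer's theorem applies.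

Brouwer's theorem is proved following Milnor and Rogers. Suppose `r` is a `C¹` retraction of a
compact set `s` onto its frontier and put `g = r - id`, which vanishes on the frontier. For small
`t` the map `id + t g`, extended by the identity, is a Lipschitz perturbation of the identity,
hence permutes the interior of `s`, so `∫ det (1 + t g')` over the interior is its volume. The
integral is polynomial in `t`, so this persists at `t = 1`, where the integrand is `det r'`. But
`det r' = 0`, since otherwise `r` would be open at some point. A `C¹` map of a Euclidean ball
without fixed points yields such a retraction by following rays to the sphere; smoothing and the
Tietze extension theorem reduce continuous maps, and balls of arbitrary norms, to this case.
-/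

section Development

open Metric
open scoped Topology NNReal

section Polynomials

theorem exists_polynomial_eval_eq_integral_eval {X : Type*} [MeasurableSpace X] {μ : Measure X}
    {p : X → Polynomial ℝ} {n : ℕ} (hdeg : ∀ x, (p x).natDegree ≤ n)
    (hint : ∀ t, Integrable (fun x => (p x).eval t) μ) :
    ∃ P : Polynomial ℝ, ∀ t, P.eval t = ∫ x, (p x).eval t ∂μ := by
  let node : ℕ → ℝ := fun k => k
  have hinj : Set.InjOn node (range (n + 1)) := Nat.cast_injective.injOn
  have hinterp (x : X) (t : ℝ) : (p x).eval t = ∑ k ∈ range (n + 1),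
      (p x).eval (node k) * (Lagrange.basis (range (n + 1)) node k).eval t := by
    have hlt : (p x).degree < #(range (n + 1)) := by
      rw [card_range]
      exact Polynomial.degree_le_natDegree.trans_lt (mod_cast Nat.lt_succ_of_le (hdeg x))
    conv_lhs => rw [Lagrange.eq_interpolate hinj hlt]
    simp [Lagrange.interpolate_apply, Polynomial.eval_finsetSum]
  refine ⟨Lagrange.interpolate (range (n + 1)) node fun k => ∫ x, (p x).eval (node k) ∂μ,
    fun t => ?_⟩
  simp_rw [hinterp _ t]
  rw [integral_finsetSum _ fun k _ => (hint (node k)).mul_const _]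
  simp [Lagrange.interpolate_apply, Polynomial.eval_finsetSum, integral_mul_const]

theorem exists_polynomial_eval_eq_det_one_add_smul {R M : Type*} [CommRing R] [Nontrivial R]
    [AddCommGroup M] [Module R M] [Module.Free R M] [Module.Finite R M] (f : Module.End R M) :
    ∃ p : Polynomial R, p.natDegree ≤ Module.finrank R M ∧
      ∀ t, p.eval t = LinearMap.det (1 + t • f) := by
  let b := Module.finBasis R M
  let A := LinearMap.toMatrix b b f
  refine ⟨Matrix.det ((Polynomial.X : Polynomial R) • A.map Polynomial.C +
    (1 : Matrix _ _ R).map Polynomial.C), ?_, fun t => ?_⟩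
  · simpa using Polynomial.natDegree_det_X_add_C_le A 1
  · rw [← LinearMap.det_toMatrix b, map_add, map_smul, LinearMap.toMatrix_one, add_comm,
      ← Polynomial.coe_evalRingHom, RingHom.map_det]
    congr 1
    ext i j
    rcases eq_or_ne i j with rfl | hij
    · simp [A, mul_comm t]
    · simp [A, hij, mul_comm t]

end Polynomials

section LipschitzPerturbation

theorem inter_frontier_nonempty_of_isPreconnected {X : Type*} [TopologicalSpace X] {s t : Set X}
    (ht : IsPreconnected t) (hin : (t ∩ s).Nonempty) (hout : (t \ s).Nonempty) :
    (t ∩ frontier s).Nonempty := by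
  by_contra! hmiss
  have hcover : t ⊆ interior s ∪ (closure s)ᶜ := fun z hz => by
    by_cases hzi : z ∈ interior s
    · exact .inl hzi
    · exact .inr fun hzc => hmiss.subset ⟨hz, hzc, hzi⟩
  have hmeets_interior : (t ∩ interior s).Nonempty := hin.mono fun x hx =>
    ⟨hx.1, (hcover hx.1).resolve_right fun hxc => hxc (subset_closure hx.2)⟩
  have hmeets_exterior : (t ∩ (closure s)ᶜ).Nonempty := hout.mono fun y hy =>
    ⟨hy.1, (hcover hy.1).resolve_left fun hyi => hy.2 (interior_subset hyi)⟩
  obtain ⟨z, -, hzi, hzc⟩ := ht _ _ isOpen_interior isClosed_closure.isOpen_compl hcover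
    hmeets_interior hmeets_exterior
  exact hzc (interior_subset_closure hzi)

variable {E : Type*} [NormedAddCommGroup E] {h : E → E} {c : ℝ≥0}

theorem bijective_id_add_of_lipschitzWith [CompleteSpace E] (hh : LipschitzWith c h)
    (hc : c < 1) : Function.Bijective fun x => x + h x := by
  refine (Function.bijective_iff_existsUnique _).2 fun y => ?_
  have hcontr : ContractingWith c fun x => y - h x :=
    ⟨hc, .of_dist_le_mul fun a b => by
      rw [dist_sub_left]; exact hh.dist_le_mul a b⟩
  refine ⟨hcontr.fixedPoint, eq_sub_iff_add_eq.1 hcontr.fixedPoint_isFixedPt.eq.symm,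
    fun x hx => hcontr.fixedPoint_unique (eq_sub_iff_add_eq.2 hx).symm⟩

theorem bijOn_id_add_of_lipschitzWith [CompleteSpace E] {s : Set E} (hh : LipschitzWith c h)
    (hc : c < 1) (hzero : ∀ x ∉ s, h x = 0) : Set.BijOn (fun x => x + h x) s s := by
  have hcompl : Set.BijOn (fun x => x + h x) sᶜ sᶜ :=
    (Set.bijOn_id sᶜ).congr fun x hx => by simp [hzero x hx]
  simpa using hcompl.compl (bijective_id_add_of_lipschitzWith hh hc)

variable [NormedSpace ℝ E]

theorem lipschitzWith_indicator_of_frontier {F : Type*} [NormedAddCommGroup F] {s : Set E}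
    {g : E → F} (hs : IsClosed s) (hg : LipschitzOnWith c g s)
    (hzero : ∀ x ∈ frontier s, g x = 0) : LipschitzWith c (s.indicator g) := by
  have hout {x y : E} (hx : x ∈ s) (hy : y ∉ s) : dist (g x) 0 ≤ c * dist x y := by
    obtain ⟨z, hz, hzs⟩ : (segment ℝ x y ∩ frontier s).Nonempty :=
      inter_frontier_nonempty_of_isPreconnected (convex_segment x y).isPreconnected
        ⟨x, left_mem_segment ℝ x y, hx⟩ ⟨y, right_mem_segment ℝ x y, hy⟩
    calc dist (g x) 0 = dist (g x) (g z) := by rw [hzero z hzs]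
      _ ≤ c * dist x z := hg.dist_le_mul x hx z (hs.frontier_subset hzs)
      _ ≤ c * dist x y := by
        gcongr
        linarith [dist_add_dist_of_mem_segment hz, dist_nonneg (x := z) (y := y)]
  refine .of_dist_le_mul fun x y => ?_
  by_cases hx : x ∈ s <;> by_cases hy : y ∈ s
  · simpa [hx, hy] using hg.dist_le_mul x hx y hy
  · simpa [hx, hy] using hout hx hy
  · simpa [hx, hy, dist_comm] using hout hy hx
  · simp [hx, hy, mul_nonneg]

theorem exists_lipschitzOnWith_of_contDiffAt {F : Type*} [NormedAddCommGroup F] [NormedSpace ℝ F]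
    {s : Set E} {g : E → F} (hs : IsCompact s) (hg : ∀ x ∈ s, ContDiffAt ℝ 1 g x) :
    ∃ C, LipschitzOnWith C g s :=
  LocallyLipschitzOn.exists_lipschitzOnWith_of_compact hs fun x hx =>
    let ⟨C, t, ht, hC⟩ := (hg x hx).exists_lipschitzOnWith
    ⟨C, t, mem_nhdsWithin_of_mem_nhds ht, hC⟩

end LipschitzPerturbation

section NoRetraction

variable {E : Type*} [NormedAddCommGroup E] [NormedSpace ℝ E] [FiniteDimensional ℝ E]

theorem det_one_add_pos_of_norm_lt_one {L : E →L[ℝ] E} (hL : ‖L‖ < 1) : 0 < (1 + L).det := by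
  have : CompleteSpace E := FiniteDimensional.complete ℝ E
  have hne : ∀ t ∈ Set.Icc (0 : ℝ) 1, (1 + t • L).det ≠ 0 := fun t ht => by
    have hlt : ‖-(t • L)‖ < 1 := by
      rw [norm_neg, norm_smul, Real.norm_of_nonneg ht.1]
      exact (mul_le_of_le_one_left (norm_nonneg L) ht.2).trans_lt hL
    have hunit : IsUnit (1 + t • L) := by
      simpa using isUnit_one_sub_of_norm_lt_one hlt
    exact (LinearMap.isUnit_det _ (hunit.map ContinuousLinearMap.toLinearMapRingHom)).ne_zero
  have hcont : ContinuousOn (fun t : ℝ => (1 + t • L).det) (Set.Icc 0 1) :=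
    (ContinuousLinearMap.continuous_det.comp (by fun_prop)).continuousOn
  by_contra! hle
  obtain ⟨t, ht, hdet⟩ : (0 : ℝ) ∈ (fun t : ℝ => (1 + t • L).det) '' Set.Icc 0 1 :=
    intermediate_value_Icc' zero_le_one hcont
      ⟨by simpa using hle, by simp [ContinuousLinearMap.det]⟩
  exact hne t ht hdet

variable {s : Set E} {g r : E → E}

theorem det_fderiv_eq_zero_of_mapsTo_frontier {x : E} (hs : IsClosed s) (hx : x ∈ interior s)
    (hr : ContDiffAt ℝ 1 r x) (hmaps : Set.MapsTo r s (frontier s)) : (fderiv ℝ r x).det = 0 := by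
  have : CompleteSpace E := FiniteDimensional.complete ℝ E
  by_contra hdet
  have hsurj : (fderiv ℝ r x).range = ⊤ :=
    LinearMap.range_eq_top.2 (LinearMap.equivOfDetNeZero _ hdet).surjective
  have hopen : Filter.map r (𝓝 x) = 𝓝 (r x) :=
    (hr.hasStrictFDerivAt one_ne_zero).map_nhds_eq_of_surj hsurj
  have hnhds : frontier s ∈ 𝓝 (r x) := by
    rw [← hopen, Filter.mem_map]
    exact Filter.mem_of_superset (mem_interior_iff_mem_nhds.1 hx) hmaps
  simpa [interior_frontier hs] using mem_interior_iff_mem_nhds.2 hnhds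

section ChangeOfVariables

variable [MeasurableSpace E] [BorelSpace E] (μ : Measure E) [μ.IsAddHaarMeasure]

theorem setIntegral_det_one_add_fderiv_of_lipschitzWith {u : Set E} {h : E → E} {c : ℝ≥0}
    (hu : MeasurableSet u) (hh : LipschitzWith c h) (hc : c < 1)
    (hdiff : ∀ x ∈ u, DifferentiableAt ℝ h x) (hzero : ∀ x ∉ u, h x = 0) :
    ∫ x in u, (1 + fderiv ℝ h x).det ∂μ = μ.real u := by
  have : CompleteSpace E := FiniteDimensional.complete ℝ E
  have hbij := bijOn_id_add_of_lipschitzWith hh hc hzero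
  have hderiv : ∀ x ∈ u, HasFDerivWithinAt (fun x => x + h x) (1 + fderiv ℝ h x) u x :=
    fun x hx => ((hasFDerivAt_id x).add (hdiff x hx).hasFDerivAt).hasFDerivWithinAt
  have hdet (x : E) : 0 < (1 + fderiv ℝ h x).det :=
    det_one_add_pos_of_norm_lt_one ((norm_fderiv_le_of_lipschitz ℝ hh).trans_lt (mod_cast hc))
  have hchange := integral_image_eq_integral_abs_det_fderiv_smul μ hu hderiv hbij.injOn
    fun _ => (1 : ℝ)
  simpa [hbij.image_eq, abs_of_pos (hdet _)] using hchange.symm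

theorem eventually_setIntegral_det_one_add_smul_fderiv (hs : IsCompact s)
    (hg : ∀ x ∈ s, ContDiffAt ℝ 1 g x) (hzero : ∀ x ∈ frontier s, g x = 0) :
    ∀ᶠ t in 𝓝 (0 : ℝ),
      ∫ x in interior s, (1 + t • fderiv ℝ g x).det ∂μ = μ.real (interior s) := by
  obtain ⟨C, hC⟩ := exists_lipschitzOnWith_of_contDiffAt hs hg
  have hlip : LipschitzWith C (s.indicator g) :=
    lipschitzWith_indicator_of_frontier hs.isClosed hC hzero
  have hsmall : ∀ᶠ t in 𝓝 (0 : ℝ), ‖t‖₊ * C < 1 :=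
    (Continuous.tendsto' (by fun_prop) _ _ (by simp)).eventually_lt_const zero_lt_one
  filter_upwards [hsmall] with t ht
  have hderiv : ∀ x ∈ interior s, HasFDerivAt (t • s.indicator g) (t • fderiv ℝ g x) x :=
    fun x hx => by
      have hgx := ((hg x (interior_subset hx)).differentiableAt one_ne_zero).hasFDerivAt
      refine (hgx.congr_of_eventuallyEq ?_).const_smul t
      filter_upwards [mem_interior_iff_mem_nhds.1 hx] with y hy
      exact Set.indicator_of_mem hy g
  have hout : ∀ x ∉ interior s, (t • s.indicator g) x = 0 := fun x hx => by
    by_cases hxs : x ∈ s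
    · simp [hxs, hzero x ⟨subset_closure hxs, hx⟩]
    · simp [hxs]
  rw [← setIntegral_det_one_add_fderiv_of_lipschitzWith μ isOpen_interior.measurableSet
    ((lipschitzWith_smul t).comp hlip) ht (fun x hx => (hderiv x hx).differentiableAt) hout]
  exact setIntegral_congr_fun isOpen_interior.measurableSet fun x hx => by
    simp only [← (hderiv x hx).fderiv]; rfl

theorem setIntegral_det_one_add_smul_fderiv (hs : IsCompact s)
    (hg : ∀ x ∈ s, ContDiffAt ℝ 1 g x) (hzero : ∀ x ∈ frontier s, g x = 0) (t : ℝ) :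
    ∫ x in interior s, (1 + t • fderiv ℝ g x).det ∂μ = μ.real (interior s) := by
  have hcont : ContinuousOn (fderiv ℝ g) s := fun x hx =>
    ((hg x hx).fderiv_right (m := 0) (by simp)).continuousAt.continuousWithinAt
  have hint (t : ℝ) : IntegrableOn (fun x => (1 + t • fderiv ℝ g x).det) (interior s) μ := by
    refine (ContinuousOn.integrableOn_compact hs ?_).mono_set interior_subset
    exact ContinuousLinearMap.continuous_det.comp_continuousOn
      (continuousOn_const.add (hcont.const_smul t))
  choose p hdeg hp using fun x => exists_polynomial_eval_eq_det_one_add_smul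
    (fderiv ℝ g x : E →ₗ[ℝ] E)
  obtain ⟨P, hP⟩ := exists_polynomial_eval_eq_integral_eval (μ := μ.restrict (interior s)) hdeg
    fun t => by simp only [hp]; exact hint t
  have hPdet (t : ℝ) : P.eval t = ∫ x in interior s, (1 + t • fderiv ℝ g x).det ∂μ := by
    simp_rw [hP, hp]; rfl
  have hconst : P = Polynomial.C (μ.real (interior s)) := by
    refine Polynomial.eq_of_infinite_eval_eq _ _ (infinite_of_mem_nhds 0 ?_)
    filter_upwards [eventually_setIntegral_det_one_add_smul_fderiv μ hs hg hzero] with t ht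
    simpa [hPdet] using ht
  rw [← hPdet, hconst, Polynomial.eval_C]

end ChangeOfVariables

theorem not_mapsTo_frontier_of_contDiffAt (hs : IsCompact s) (hne : (interior s).Nonempty)
    (hr : ∀ x ∈ s, ContDiffAt ℝ 1 r x) (hid : ∀ x ∈ frontier s, r x = x) :
    ¬ Set.MapsTo r s (frontier s) := by
  intro hmaps
  borelize E
  let μ : Measure E := Measure.addHaar
  have hvol := setIntegral_det_one_add_smul_fderiv μ (g := r - id) hs
    (fun x hx => (hr x hx).sub contDiffAt_id) (fun x hx => by simp [hid x hx]) 1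
  have hzero : ∀ x ∈ interior s, (1 + (1 : ℝ) • fderiv ℝ (r - id) x).det = 0 := fun x hx => by
    have hrx := hr x (interior_subset hx)
    have hsub : fderiv ℝ (r - id) x = fderiv ℝ r x - 1 :=
      ((hrx.differentiableAt one_ne_zero).hasFDerivAt.sub (hasFDerivAt_id x)).fderiv
    rw [one_smul, hsub, add_sub_cancel]
    exact det_fderiv_eq_zero_of_mapsTo_frontier hs.isClosed hx hrx hmaps
  rw [setIntegral_congr_fun isOpen_interior.measurableSet hzero, integral_zero] at hvol
  refine (isOpen_interior.measure_pos μ hne).ne' ?_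
  exact (measureReal_eq_zero_iff
    ((measure_mono interior_subset).trans_lt hs.measure_lt_top).ne).1 hvol.symm

end NoRetraction

section RayToSphere

variable {E : Type*} [NormedAddCommGroup E] [InnerProductSpace ℝ E] {x u : E} {R : ℝ}

/-- A quarter of the discriminant of the quadratic equation `‖x + l • u‖ ^ 2 = R ^ 2` in `l`. -/
noncomputable def rayDiscrim (R : ℝ) (x u : E) : ℝ :=
  ⟪x, u⟫ ^ 2 + ‖u‖ ^ 2 * (R ^ 2 - ‖x‖ ^ 2)

/-- The point where the ray from `x` in direction `u` leaves the ball of radius `R` about `0`,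
obtained from the larger root of `‖x + l • u‖ ^ 2 = R ^ 2`. -/
noncomputable def rayToSphere (R : ℝ) (x u : E) : E :=
  x + ((-⟪x, u⟫ + √(rayDiscrim R x u)) / ‖u‖ ^ 2) • u

theorem rayDiscrim_pos (hu : u ≠ 0) (hx : ‖x‖ ≤ R) (hout : ‖x‖ = R → 0 < ⟪x, u⟫) :
    0 < rayDiscrim R x u := by
  rcases hx.lt_or_eq with hlt | heq
  · have : 0 < R ^ 2 - ‖x‖ ^ 2 := by nlinarith [norm_nonneg x]
    unfold rayDiscrim
    positivity
  · have := hout heq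
    rw [rayDiscrim, heq, sub_self, mul_zero, add_zero]
    positivity

theorem norm_rayToSphere (hR : 0 ≤ R) (hu : u ≠ 0) (hD : 0 ≤ rayDiscrim R x u) :
    ‖rayToSphere R x u‖ = R := by
  rw [← sq_eq_sq₀ (norm_nonneg _) hR, rayToSphere, norm_add_sq_real, norm_smul, mul_pow,
    inner_smul_right, Real.norm_eq_abs, sq_abs]
  have hsq := Real.sq_sqrt hD
  set d := √(rayDiscrim R x u)
  rw [rayDiscrim] at hsq
  have hu' : ‖u‖ ≠ 0 := norm_ne_zero_iff.2 hu
  field_simp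
  linear_combination hsq

theorem rayToSphere_of_norm_eq (hx : ‖x‖ = R) (hout : 0 ≤ ⟪x, u⟫) : rayToSphere R x u = x := by
  simp [rayToSphere, rayDiscrim, hx, Real.sqrt_sq hout]

theorem contDiffAt_rayToSphere {v : E → E} (hv : ContDiffAt ℝ 1 v x) (hne : v x ≠ 0)
    (hD : rayDiscrim R x (v x) ≠ 0) : ContDiffAt ℝ 1 (fun y => rayToSphere R y (v y)) x := by
  have hinner : ContDiffAt ℝ 1 (fun y => ⟪y, v y⟫) x := contDiffAt_id.inner ℝ hv
  have hdiscrim : ContDiffAt ℝ 1 (fun y => rayDiscrim R y (v y)) x :=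
    (hinner.pow 2).add ((hv.norm_sq ℝ).mul (contDiffAt_const.sub (contDiffAt_id.norm_sq ℝ)))
  exact contDiffAt_id.add
    (((hinner.neg.add (hdiscrim.sqrt hD)).div (hv.norm_sq ℝ) (by simpa using hne)).smul hv)

theorem exists_fixedPt_of_contDiff_of_mapsTo_ball [FiniteDimensional ℝ E] {f : E → E} (hR : 0 < R)
    (hf : ContDiff ℝ 1 f) (hmaps : Set.MapsTo f (closedBall 0 R) (ball 0 R)) :
    ∃ x ∈ closedBall 0 R, f x = x := by
  by_contra! hfix
  have hne : ∀ x ∈ closedBall 0 R, x - f x ≠ 0 := fun x hx => sub_ne_zero.2 (hfix x hx).symm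
  have hout (x : E) (hx : ‖x‖ = R) : 0 < ⟪x, x - f x⟫ := by
    have hfx : ‖f x‖ < R := by simpa using hmaps (mem_closedBall_zero_iff.2 hx.le)
    calc 0 < R * (R - ‖f x‖) := mul_pos hR (sub_pos.2 hfx)
      _ = ‖x‖ ^ 2 - ‖x‖ * ‖f x‖ := by rw [hx]; ring
      _ ≤ ‖x‖ ^ 2 - ⟪x, f x⟫ := by gcongr; exact real_inner_le_norm x (f x)
      _ = ⟪x, x - f x⟫ := by rw [inner_sub_right, real_inner_self_eq_norm_sq]
  have hD : ∀ x ∈ closedBall 0 R, 0 < rayDiscrim R x (x - f x) := fun x hx =>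
    rayDiscrim_pos (hne x hx) (mem_closedBall_zero_iff.1 hx) (hout x)
  refine not_mapsTo_frontier_of_contDiffAt (isCompact_closedBall (0 : E) R)
    (r := fun x => rayToSphere R x (x - f x)) ?_ (fun x hx => ?_) (fun x hx => ?_) fun x hx => ?_
  · exact ⟨0, ball_subset_interior_closedBall (mem_ball_self hR)⟩
  · exact contDiffAt_rayToSphere (contDiffAt_id.sub hf.contDiffAt) (hne x hx) (hD x hx).ne'
  · rw [frontier_closedBall _ hR.ne', mem_sphere_zero_iff_norm] at hx
    exact rayToSphere_of_norm_eq hx (hout x hx).le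
  · rw [frontier_closedBall _ hR.ne', mem_sphere_zero_iff_norm]
    exact norm_rayToSphere hR.le (hne x hx) (hD x hx).le

theorem exists_fixedPt_of_continuous_of_norm_le [FiniteDimensional ℝ E] {f : E → E}
    (hf : Continuous f) (hbound : ∀ x, ‖f x‖ ≤ R) : ∃ x, f x = x := by
  by_contra! hfix
  have hR : 0 ≤ R := (norm_nonneg _).trans (hbound 0)
  have hpos (x : E) : 0 < min 1 ‖f x - x‖ :=
    lt_min one_pos (norm_pos_iff.2 (sub_ne_zero.2 (hfix x)))
  obtain ⟨k, hk, hdist, -⟩ := hf.exists_contDiff_approx 1 (ε := fun x => min 1 ‖f x - x‖)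
    (by fun_prop) hpos
  have hmaps : Set.MapsTo k (closedBall 0 (R + 1)) (ball 0 (R + 1)) := fun x _ => by
    rw [mem_ball_zero_iff]
    calc ‖k x‖ ≤ ‖f x‖ + ‖k x - f x‖ := norm_le_norm_add_norm_sub' _ _
      _ < R + 1 := add_lt_add_of_le_of_lt (hbound x)
        (dist_eq_norm (k x) (f x) ▸ (hdist x).trans_le (min_le_left _ _))
  obtain ⟨x, -, hx⟩ := exists_fixedPt_of_contDiff_of_mapsTo_ball (by positivity) hk hmaps
  refine ((hdist x).trans_le (min_le_right _ _)).ne ?_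
  rw [hx, dist_comm, dist_eq_norm]

end RayToSphere

section FixedPoint

universe u

variable {E : Type u} [NormedAddCommGroup E] [NormedSpace ℝ E] [FiniteDimensional ℝ E]

theorem exists_fixedPt_of_isCompact_of_tietzeExtension {s : Set E} (hs : IsCompact s)
    [TietzeExtension.{u} s] (f : C(s, s)) : ∃ x, f x = x := by
  obtain ⟨F, hF⟩ := f.exists_restrict_eq hs.isClosed
  let e := toEuclidean (E := E)
  obtain ⟨R, hR⟩ := (hs.image e.continuous).isBounded.exists_norm_le
  obtain ⟨y, hy⟩ := exists_fixedPt_of_continuous_of_norm_le (f := fun y => e (F (e.symm y)))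
    (by fun_prop) fun y => hR _ ⟨_, (F (e.symm y)).2, rfl⟩
  refine ⟨F (e.symm y), ?_⟩
  rw [← hF]
  simp [e.eq_symm_apply.2 hy]

theorem exists_fixedPt_closedBall {f : E → E} {x₀ : E} {R : ℝ} (hR : 0 < R)
    (hf : ContinuousOn f (closedBall x₀ R))
    (hmaps : Set.MapsTo f (closedBall x₀ R) (closedBall x₀ R)) :
    ∃ x ∈ closedBall x₀ R, f x = x := by
  have : TietzeExtension.{u} (closedBall x₀ R) := Metric.instTietzeExtensionClosedBall ℝ x₀ hR
  obtain ⟨x, hx⟩ := exists_fixedPt_of_isCompact_of_tietzeExtension (isCompact_closedBall x₀ R)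
    ⟨hmaps.restrict, hf.mapsToRestrict hmaps⟩
  exact ⟨x, x.2, congrArg Subtype.val hx⟩

end FixedPoint

theorem statement1_general {E E' : Type*} [NormedAddCommGroup E] [NormedSpace ℝ E]
    [FiniteDimensional ℝ E] [NormedAddCommGroup E'] [NormedSpace ℝ E'] [FiniteDimensional ℝ E']
    (hdim : Module.finrank ℝ E = Module.finrank ℝ E') {α β : ℝ} (hα : 0 < α) {F G : E → E'}
    (A : E →ₗ[ℝ] E') (hF : ContinuousOn F (closedBall 0 1))
    (hFAG : ∀ x ∈ closedBall (0 : E) 1, F x = A x + G x) (hA : ∀ x, α * ‖x‖ ≤ ‖A x‖)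
    (hG : ∀ x ∈ closedBall (0 : E) 1, ‖G x‖ ≤ β) :
    closedBall (0 : E') (α - β) ⊆ F '' closedBall 0 1 := by
  intro y hy
  have hinj : Function.Injective A := (injective_iff_map_eq_zero A).2 fun x hx =>
    norm_le_zero_iff.1 (nonpos_of_mul_nonpos_right (by simpa [hx] using hA x) hα)
  let e : E ≃L[ℝ] E' := (A.linearEquivOfInjective hinj hdim).toContinuousLinearEquiv
  have hGcont : ContinuousOn G (closedBall 0 1) :=
    (hF.sub e.continuous.continuousOn).congr fun x hx => eq_sub_of_add_eq' (hFAG x hx).symm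
  have hmaps : Set.MapsTo (fun x => e.symm (y - G x)) (closedBall 0 1) (closedBall 0 1) := by
    intro x hx
    rw [mem_closedBall_zero_iff]
    refine le_of_mul_le_mul_left ?_ hα
    calc α * ‖e.symm (y - G x)‖ ≤ ‖e (e.symm (y - G x))‖ := hA _
      _ = ‖y - G x‖ := by rw [e.apply_symm_apply]
      _ ≤ ‖y‖ + ‖G x‖ := norm_sub_le _ _
      _ ≤ (α - β) + β := add_le_add (mem_closedBall_zero_iff.1 hy) (hG x hx)
      _ = α * 1 := by ring
  obtain ⟨x, hx, hfix⟩ := exists_fixedPt_closedBall one_pos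
    (e.symm.continuous.comp_continuousOn (continuousOn_const.sub hGcont)) hmaps
  have hAx : A x = y - G x := (e.symm_apply_eq.1 hfix).symm
  exact ⟨x, hx, by rw [hFAG x hx, hAx, sub_add_cancel]⟩

end Development

/-- If `F = A + G` on the closed unit ball `B^q`, `F` continuous on `B^q`,
`A` linear with `‖A x‖ ≥ α‖x‖` for all `x`, and `‖G x‖ ≤ α‖x‖/2` on `B^q`, then the image
`F(B^q)` contains the closed ball of radius `α/2` centered at the origin. -/
theorem statement1 (q : ℕ) (hq : 1 ≤ q) (α : ℝ) (hα : 0 < α)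
    (F G : EuclideanSpace ℝ (Fin q) → EuclideanSpace ℝ (Fin q))
    (A : EuclideanSpace ℝ (Fin q) →ₗ[ℝ] EuclideanSpace ℝ (Fin q))
    (hF : ContinuousOn F (Metric.closedBall 0 1))
    (hFAG : ∀ x ∈ Metric.closedBall (0 : EuclideanSpace ℝ (Fin q)) 1, F x = A x + G x)
    (hA : ∀ x : EuclideanSpace ℝ (Fin q), α * ‖x‖ ≤ ‖A x‖)
    (hG : ∀ x ∈ Metric.closedBall (0 : EuclideanSpace ℝ (Fin q)) 1, ‖G x‖ ≤ α * ‖x‖ / 2) :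
    Metric.closedBall (0 : EuclideanSpace ℝ (Fin q)) (α / 2) ⊆
      F '' Metric.closedBall 0 1 := by
  have hGhalf : ∀ x ∈ Metric.closedBall (0 : EuclideanSpace ℝ (Fin q)) 1, ‖G x‖ ≤ α / 2 :=
    fun x hx => (hG x hx).trans (by nlinarith [mem_closedBall_zero_iff.1 hx])
  simpa only [sub_half] using statement1_general rfl hα A hF hFAG hA hGhalf
end

section
/- For every integer d ≥ 1 there is a constant b_d depending only on d such that for every n ≥ 1 and every N ≥ 1 there exist an area-regular partition R = {R_1,…,R_N} of S^d and points x_i ∈ R_i (i = 1,…,N) with ‖(1/N)(G_{x_1}+…+G_{x_N})‖_w ≤ b_d·n^{d/2}/N^{1/2+1/d}; equivalently, (1/N²)·Σ_{i,j=1}^N g_w((x_i,x_j)) ≤ b_d²·n^d/N^{1+2/d}. -/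
open MeasureTheory Finset
open scoped RealInnerProductSpace

noncomputable section
attribute [local instance] Classical.propDecidable

end

/-
Cut `S^d` into `N` regions `R_i` of equal area and of diameter `O(N^{-1/d})`, and choose the points
`x_i ∈ R_i` independently and uniformly. Since `g_w` has mean zero, the expectation of the energy
`∑ g_w((x_i, x_j))` retains only its diagonal part, which is at most the sum over `i` of the
oscillation `g_w(1) - g_w((a, b))`, `a, b ∈ R_i`. Bounding the derivatives of Gegenbauer polynomials
gives `g_w(1) - g_w(t) ≤ C_d n^d (1 - t)`, so each term is `O(n^d N^{-2/d})`. Some choice of points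
does at least as well as the average, and the energy is `‖∑ G_{x_i}‖_w²` because the `G_x`
reproduce: `⟨G_x, G_y⟩_w = g_w((x, y))`.

The regions are cut from Voronoi-like cells `C_v` around a maximal `δ`-separated set. The graph of
touching cells is connected, so one can dismantle it one vertex at a time, each vertex being
adjacent to a remaining one; the removed cell is divided into tiles of area `1/N` and its
left-over, smaller than a tile, is handed to the neighbour.
-/

section NullFrontier

variable {X : Type*} [TopologicalSpace X] [MeasurableSpace X] {μ : Measure X} {s t : Set X}

lemma null_frontier_union (hs : μ (frontier s) = 0) (ht : μ (frontier t) = 0) :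
    μ (frontier (s ∪ t)) = 0 :=
  measure_mono_null ((frontier_union_subset s t).trans
    (Set.union_subset_union Set.inter_subset_left Set.inter_subset_right))
    (measure_union_null hs ht)

lemma null_frontier_diff (hs : μ (frontier s) = 0) (ht : μ (frontier t) = 0) :
    μ (frontier (s \ t)) = 0 := by
  rw [Set.sdiff_eq]
  exact null_frontier_inter hs (by rwa [frontier_compl])

lemma null_frontier_biUnion {ι : Type*} {f : ι → Set X} (S : Finset ι)
    (hf : ∀ i ∈ S, μ (frontier (f i)) = 0) : μ (frontier (⋃ i ∈ S, f i)) = 0 := by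
  classical
  induction S using Finset.induction_on with
  | empty => simp
  | insert a S _ ih =>
    rw [Finset.set_biUnion_insert]
    exact null_frontier_union (hf a (by simp)) (ih fun i hi => hf i (by simp [hi]))

end NullFrontier

section Splitting

variable {X : Type*} [PseudoMetricSpace X] [MeasurableSpace X] {μ : Measure X}

lemma null_frontier_closedBall {x : X} {r : ℝ} (h : μ (Metric.sphere x r) = 0) :
    μ (frontier (Metric.closedBall x r)) = 0 :=
  measure_mono_null Metric.frontier_closedBall_subset_sphere h

lemma null_frontier_ball {x : X} {r : ℝ} (h : μ (Metric.sphere x r) = 0) :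
    μ (frontier (Metric.ball x r)) = 0 :=
  measure_mono_null Metric.frontier_ball_subset_sphere h

lemma continuous_measureReal_closedBall [OpensMeasurableSpace X] [IsFiniteMeasure μ] {x : X}
    (hx : ∀ r, μ (Metric.sphere x r) = 0) :
    Continuous fun r => μ.real (Metric.closedBall x r) := by
  have hind : (fun r => μ.real (Metric.closedBall x r)) =
      fun r => ∫ y, (Metric.closedBall x r).indicator 1 y ∂μ := by
    ext r
    rw [integral_indicator_one measurableSet_closedBall]
  rw [hind, continuous_iff_continuousAt]
  intro r
  refine continuousAt_of_dominated (bound := 1) (.of_forall fun s =>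
    (measurable_one.indicator measurableSet_closedBall).aestronglyMeasurable) (.of_forall fun s =>
    .of_forall fun y => ?_) (integrable_const _) ?_
  · rw [norm_indicator_eq_indicator_norm]
    exact Set.indicator_le' (by simp) (by simp) y
  · have hne : ∀ᵐ y ∂μ, dist y x ≠ r := by simpa [ae_iff, Metric.sphere] using hx r
    filter_upwards [hne] with y hy
    rcases hy.lt_or_gt with hlt | hgt
    · refine (continuousAt_const (y := (1 : ℝ))).congr ?_
      filter_upwards [lt_mem_nhds hlt] with s hs
      simp [hs.le]
    · refine (continuousAt_const (y := (0 : ℝ))).congr ?_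
      filter_upwards [gt_mem_nhds hgt] with s hs
      simp [hs]

lemma exists_subset_measureReal_eq [OpensMeasurableSpace X] [BoundedSpace X] [IsFiniteMeasure μ]
    {x : X} (hx : ∀ r, μ (Metric.sphere x r) = 0) {s : Set X} (hs : μ (frontier s) = 0)
    {a : ℝ} (ha0 : 0 ≤ a) (ha : a ≤ μ.real s) :
    ∃ t ⊆ s, μ (frontier t) = 0 ∧ μ.real t = a := by
  have hcont : Continuous fun r => (μ.restrict s).real (Metric.closedBall x r) :=
    continuous_measureReal_closedBall fun r => Measure.absolutelyContinuous_of_le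
      Measure.restrict_le_self (hx r)
  obtain ⟨ρ, hρ⟩ := (Bornology.IsBounded.all (Set.univ : Set X)).subset_closedBall x
  obtain ⟨r, hr⟩ := intermediate_value_univ (-1) ρ hcont
    (show a ∈ Set.Icc _ _ by simpa [Set.univ_subset_iff.mp hρ] using ⟨ha0, ha⟩)
  refine ⟨s ∩ Metric.closedBall x r, Set.inter_subset_left,
    null_frontier_inter hs (null_frontier_closedBall (hx r)), ?_⟩
  rwa [Set.inter_comm, ← measureReal_restrict_apply measurableSet_closedBall]

end Splitting

section Tiles

/-- `HasTiles μ m 𝓑 k s`: the set `s` contains `k` pairwise disjoint tiles, i.e. sets of measure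
`m` with `μ`-null boundary, each of which lies in a member of the family `𝓑`. -/
def HasTiles {X : Type*} [TopologicalSpace X] [MeasurableSpace X] (μ : Measure X) (m : ℝ)
    (𝓑 : Set (Set X)) (k : ℕ) (s : Set X) : Prop :=
  ∃ (ι : Type) (_ : Fintype ι) (R : ι → Set X), Fintype.card ι = k ∧
    Pairwise (Function.onFun Disjoint R) ∧ ∀ i, R i ⊆ s ∧ μ (frontier (R i)) = 0 ∧
      μ.real (R i) = m ∧ ∃ b ∈ 𝓑, R i ⊆ b

namespace HasTiles

variable {X : Type*}

section TopologicalSpace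

variable [TopologicalSpace X] [MeasurableSpace X] {μ : Measure X} {m : ℝ}
  {𝓑 : Set (Set X)} {k l : ℕ} {s t : Set X}

lemma zero : HasTiles μ m 𝓑 0 s :=
  ⟨Empty, inferInstance, Empty.elim, rfl, nofun, nofun⟩

lemma one (hs : μ (frontier s) = 0) (hm : μ.real s = m) {b : Set X} (hb : b ∈ 𝓑) (hsb : s ⊆ b) :
    HasTiles μ m 𝓑 1 s :=
  ⟨Unit, inferInstance, fun _ => s, rfl, Subsingleton.pairwise,
    fun _ => ⟨subset_rfl, hs, hm, b, hb, hsb⟩⟩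

lemma mono (h : HasTiles μ m 𝓑 k s) {𝓑' : Set (Set X)} (h𝓑 : 𝓑 ⊆ 𝓑') (hst : s ⊆ t) :
    HasTiles μ m 𝓑' k t := by
  obtain ⟨ι, hι, R, hcard, hdisj, hR⟩ := h
  exact ⟨ι, hι, R, hcard, hdisj, fun i => let ⟨hRs, hfr, hm, b, hb, hRb⟩ := hR i
    ⟨hRs.trans hst, hfr, hm, b, h𝓑 hb, hRb⟩⟩

lemma union (hs : HasTiles μ m 𝓑 k s) (ht : HasTiles μ m 𝓑 l t) (hst : Disjoint s t) :
    HasTiles μ m 𝓑 (k + l) (s ∪ t) := by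
  obtain ⟨ι, _, R, rfl, hR, hRs⟩ := hs
  obtain ⟨κ, _, Q, rfl, hQ, hQt⟩ := ht
  refine ⟨ι ⊕ κ, inferInstance, Sum.elim R Q, Fintype.card_sum, ?_, ?_⟩
  · rintro (i | i) (j | j) hij
    · exact hR (by simpa using hij)
    · exact hst.mono (hRs i).1 (hQt j).1
    · exact (hst.mono (hRs j).1 (hQt i).1).symm
    · exact hQ (by simpa using hij)
  · rintro (i | i)
    · exact ⟨(hRs i).1.trans Set.subset_union_left, (hRs i).2⟩
    · exact ⟨(hQt i).1.trans Set.subset_union_right, (hQt i).2⟩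

end TopologicalSpace

section PseudoMetricSpace

variable [PseudoMetricSpace X] [MeasurableSpace X] [BorelSpace X] [BoundedSpace X]
  {μ : Measure X} [IsFiniteMeasure μ] {m : ℝ}

lemma of_subset {x : X} (hx : ∀ r, μ (Metric.sphere x r) = 0) {𝓑 : Set (Set X)} {b : Set X}
    (hb : b ∈ 𝓑) (hm : 0 ≤ m) {s : Set X} (hs : μ (frontier s) = 0) (hsb : s ⊆ b) {k : ℕ}
    (hk : k * m ≤ μ.real s) : HasTiles μ m 𝓑 k s := by
  induction k generalizing s with
  | zero => exact zero
  | succ k ih =>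
    push_cast at hk
    have hkm : 0 ≤ k * m := by positivity
    obtain ⟨t, hts, ht, htm⟩ := exists_subset_measureReal_eq hx hs hm (by linarith)
    have hrest : HasTiles μ m 𝓑 k (s \ t) := by
      refine ih (null_frontier_diff hs ht) (Set.sdiff_subset.trans hsb) ?_
      have := le_measureReal_sdiff (μ := μ) (s₁ := s) (s₂ := t)
      linarith
    simpa [Set.sdiff_union_of_subset hts] using
      hrest.union (one ht htm hb (hts.trans hsb)) Set.disjoint_sdiff_left

end PseudoMetricSpace

end HasTiles

end Tiles

section Enlargement

variable {X V : Type*} [TopologicalSpace X] [MeasurableSpace X] {μ : Measure X}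
  {B C A : V → Set X} {S : Finset V} {v w : V} {D : Set X}

/-- The cells `C v`, `v ∈ S`, are enlarged to pairwise disjoint sets `A v` with `μ`-null boundary
that stay inside the windows `B v`. -/
structure IsEnlargement (μ : Measure X) (B C : V → Set X) (S : Finset V) (A : V → Set X) :
    Prop where
  null_frontier : ∀ v ∈ S, μ (frontier (A v)) = 0
  pairwiseDisjoint : (S : Set V).PairwiseDisjoint A
  subset : ∀ v ∈ S, C v ⊆ A v
  subset_window : ∀ v ∈ S, A v ⊆ B v

namespace IsEnlargement

lemma disjoint_biUnion [DecidableEq V] (hA : IsEnlargement μ B C (insert v S) A) (hv : v ∉ S) :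
    Disjoint (A v) (⋃ u ∈ S, A u) :=
  Set.disjoint_iUnion₂_right.mpr fun u hu => hA.pairwiseDisjoint (by simp) (by simp [hu])
    (ne_of_mem_of_not_mem hu hv).symm

lemma update_union [DecidableEq V] (hA : IsEnlargement μ B C (insert v S) A) (hv : v ∉ S)
    (hw : w ∈ S) (hDA : D ⊆ A v) (hDB : D ⊆ B w) (hD : μ (frontier D) = 0) :
    IsEnlargement μ B C S (Function.update A w (A w ∪ D)) := by
  have hDdisj : ∀ u ∈ S, Disjoint D (A u) := fun u hu =>
    (hA.disjoint_biUnion hv).mono hDA (Set.subset_biUnion_of_mem (u := A) hu)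
  have hAdisj : ∀ u ∈ S, ∀ u' ∈ S, u ≠ u' → Disjoint (A u) (A u') := fun u hu u' hu' =>
    hA.pairwiseDisjoint (by simp [hu]) (by simp [hu'])
  refine ⟨fun u hu => ?_, fun u hu u' hu' huu' => ?_, fun u hu => ?_, fun u hu => ?_⟩
  · rcases eq_or_ne u w with rfl | huw
    · simpa using null_frontier_union (hA.null_frontier u (by simp [hu])) hD
    · simpa [huw] using hA.null_frontier u (by simp [hu])
  · rw [Function.onFun]
    rcases eq_or_ne u w with rfl | huw
    · simpa [huu'.symm] using ⟨hAdisj _ hu _ hu' huu', hDdisj _ hu'⟩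
    · rcases eq_or_ne u' w with rfl | huw'
      · simpa [huu'] using ⟨hAdisj _ hu _ hu' huu', (hDdisj _ hu).symm⟩
      · simpa [huw, huw'] using hAdisj _ hu _ hu' huu'
  · rcases eq_or_ne u w with rfl | huw
    · simpa using (hA.subset u (by simp [hu])).trans Set.subset_union_left
    · simpa [huw] using hA.subset u (by simp [hu])
  · rcases eq_or_ne u w with rfl | huw
    · simpa using ⟨hA.subset_window u (by simp [hu]), hDB⟩
    · simpa [huw] using hA.subset_window u (by simp [hu])

end IsEnlargement

end Enlargement

section Sweep

lemma biUnion_update_union {X V : Type*} [DecidableEq V] {A : V → Set X} {S : Finset V} {w : V}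
    (hw : w ∈ S) (D : Set X) :
    ⋃ u ∈ S, Function.update A w (A w ∪ D) u = (⋃ u ∈ S, A u) ∪ D := by
  ext x
  simp only [Set.mem_iUnion, Set.mem_union, Function.update_apply]
  grind

lemma finset_univ_induction {V : Type*} [Fintype V] [Nonempty V] [DecidableEq V]
    {near : V → V → Prop}
    (hnear : ∀ S : Finset V, S.Nonempty → S ≠ univ → ∃ w ∈ S, ∃ v ∉ S, near v w)
    {P : Finset V → Prop} (singleton : ∀ v, P {v})
    (insert : ∀ v w S, w ∈ S → v ∉ S → near v w → P S → P (insert v S)) : P univ := by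
  obtain ⟨v₀⟩ := ‹Nonempty V›
  obtain ⟨S, hS⟩ := (Set.toFinite {S : Finset V | S.Nonempty ∧ P S}).exists_maximal
    ⟨{v₀}, by simp, singleton v₀⟩
  obtain ⟨hSne, hPS⟩ := hS.prop
  by_contra hPuniv
  obtain ⟨w, hw, v, hv, hvw⟩ := hnear S hSne (by rintro rfl; exact hPuniv hPS)
  exact hv (hS.le_of_ge ⟨by simp, insert v w S hw hv hvw hPS⟩ (subset_insert v S)
    (mem_insert_self v S))

variable {X V : Type*} [PseudoMetricSpace X] [MeasurableSpace X] [BorelSpace X] [BoundedSpace X]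
  {μ : Measure X} [IsFiniteMeasure μ] {m : ℝ} {B C : V → Set X} {x : X}

lemma exists_remainder (hx : ∀ r, μ (Metric.sphere x r) = 0) (hm : 0 < m) {C A : Set X}
    (hC : μ (frontier C) = 0) (hCm : m ≤ μ.real C) (hCA : C ⊆ A) :
    ∃ D ⊆ C, μ (frontier D) = 0 ∧ ∃ k : ℕ, μ.real (A \ D) = k * m := by
  have hfloor : ⌊μ.real A / m⌋₊ * m ≤ μ.real A :=
    (le_div_iff₀ hm).mp (Nat.floor_le (by positivity))
  have hlt : μ.real A < (⌊μ.real A / m⌋₊ + 1) * m := (div_lt_iff₀ hm).mp (Nat.lt_floor_add_one _)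
  obtain ⟨D, hDC, hD, hDm⟩ := exists_subset_measureReal_eq hx hC
    (a := μ.real A - ⌊μ.real A / m⌋₊ * m) (by linarith) (by linarith)
  refine ⟨D, hDC, hD, ⌊μ.real A / m⌋₊, ?_⟩
  have hadd := measureReal_union₀ (nullMeasurableSet_of_null_frontier hD)
    (Set.disjoint_sdiff_left (s := D) (t := A)).aedisjoint
  rw [Set.sdiff_union_of_subset (hDC.trans hCA)] at hadd
  linarith

/-- The remainder `D ⊆ C v` of `A v` left after cutting off as many tiles as possible is handed
over to the neighbour `w`, after which `v` can be dropped. -/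
lemma hasTiles_biUnion_insert [DecidableEq V] (hx : ∀ r, μ (Metric.sphere x r) = 0) (hm : 0 < m)
    {S : Finset V} {v w : V} (hv : v ∉ S) (hw : w ∈ S) (hC : μ (frontier (C v)) = 0)
    (hCm : m ≤ μ.real (C v)) (hCB : C v ⊆ B w)
    (hS : ∀ (A : V → Set X) (K : ℕ), IsEnlargement μ B C S A → K * m ≤ μ.real (⋃ u ∈ S, A u) →
      HasTiles μ m (Set.range B) K (⋃ u ∈ S, A u))
    {A : V → Set X} {K : ℕ} (hA : IsEnlargement μ B C (insert v S) A)
    (hK : K * m ≤ μ.real (⋃ u ∈ insert v S, A u)) :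
    HasTiles μ m (Set.range B) K (⋃ u ∈ insert v S, A u) := by
  have hvmem : v ∈ insert v S := mem_insert_self v S
  have hAv := hA.null_frontier v hvmem
  have hAB := hA.subset_window v hvmem
  obtain ⟨D, hDC, hD, k, hk⟩ := exists_remainder hx hm hC hCm (hA.subset v hvmem)
  have hDA : D ⊆ A v := hDC.trans (hA.subset v hvmem)
  rcases le_total K k with hKk | hkK
  · have hKv : K * m ≤ μ.real (A v) :=
      calc K * m ≤ k * m := by gcongr
        _ = μ.real (A v \ D) := hk.symm
        _ ≤ μ.real (A v) := measureReal_mono Set.sdiff_subset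
    exact (HasTiles.of_subset hx (Set.mem_range_self v) hm.le hAv hAB hKv).mono subset_rfl
      (Set.subset_biUnion_of_mem (u := A) hvmem)
  have hsplit : (⋃ u ∈ insert v S, A u) = (A v \ D) ∪ ((⋃ u ∈ S, A u) ∪ D) := by
    rw [set_biUnion_insert, Set.union_comm _ D, ← Set.union_assoc, Set.sdiff_union_of_subset hDA]
  have hdisj : Disjoint (A v \ D) ((⋃ u ∈ S, A u) ∪ D) :=
    Set.disjoint_union_right.mpr
      ⟨(hA.disjoint_biUnion hv).mono_left Set.sdiff_subset, Set.disjoint_sdiff_left⟩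
  have hrest : HasTiles μ m (Set.range B) (K - k) ((⋃ u ∈ S, A u) ∪ D) := by
    have hK' := hK.trans (hsplit ▸ measureReal_union_le (μ := μ) _ _)
    rw [← biUnion_update_union hw] at hK' ⊢
    refine hS _ _ (hA.update_union hv hw hDA (hDC.trans hCB) hD) ?_
    rw [Nat.cast_sub hkK]
    linarith
  rw [hsplit, ← Nat.add_sub_cancel' hkK]
  exact (HasTiles.of_subset hx (Set.mem_range_self v) hm.le (null_frontier_diff hAv hD)
    (Set.sdiff_subset.trans hAB) hk.ge).union hrest hdisj

lemma hasTiles_iUnion [Fintype V] [Nonempty V] (hx : ∀ r, μ (Metric.sphere x r) = 0) (hm : 0 < m)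
    (hC : ∀ v, μ (frontier (C v)) = 0) (hdisj : Pairwise (Function.onFun Disjoint C))
    (hCm : ∀ v, m ≤ μ.real (C v)) (hCB : ∀ v, C v ⊆ B v)
    (hconn : ∀ S : Finset V, S.Nonempty → S ≠ univ → ∃ w ∈ S, ∃ v ∉ S, C v ⊆ B w)
    {K : ℕ} (hK : K * m ≤ μ.real (⋃ v, C v)) :
    HasTiles μ m (Set.range B) K (⋃ v, C v) := by
  classical
  have sweep : ∀ (A : V → Set X) (K : ℕ), IsEnlargement μ B C univ A →
      K * m ≤ μ.real (⋃ u ∈ univ, A u) → HasTiles μ m (Set.range B) K (⋃ u ∈ univ, A u) := by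
    refine finset_univ_induction hconn (fun v A K hA hK => ?_)
      fun v w S hw hv hvw hS A K => hasTiles_biUnion_insert hx hm hv hw (hC v) (hCm v) hvw hS
    simp only [set_biUnion_singleton] at hK ⊢
    exact HasTiles.of_subset hx (Set.mem_range_self v) hm.le (hA.null_frontier v (by simp))
      (hA.subset_window v (by simp)) hK
  simpa using sweep C K ⟨fun v _ => hC v, fun v _ w _ hvw => hdisj hvw, fun v _ => subset_rfl,
    fun v _ => hCB v⟩ (by simpa using hK)

end Sweep

section Cells

lemma exists_separated_cover {X : Type*} [PseudoMetricSpace X] [CompactSpace X] {δ : ℝ}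
    (hδ : 0 < δ) : ∃ (M : ℕ) (v : Fin M → X),
      (∀ i j, i ≠ j → δ < dist (v i) (v j)) ∧ ∀ x, ∃ i, dist x (v i) ≤ δ := by
  lift δ to NNReal using hδ.le
  rw [NNReal.coe_pos] at hδ
  have hfin : Metric.packingNumber δ (Set.univ : Set X) ≠ ⊤ := by
    obtain ⟨N, -, hN, hcov⟩ := Metric.exists_finite_isCover_of_isCompact (ε := δ / 2)
      (by positivity) (isCompact_univ (X := X))
    have h2 := Metric.packingNumber_two_mul_le_externalCoveringNumber (δ / 2) (Set.univ : Set X)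
    rw [mul_div_cancel₀ δ two_ne_zero] at h2
    exact ((h2.trans hcov.externalCoveringNumber_le_encard).trans_lt hN.encard_lt_top).ne
  set S := Metric.maximalSeparatedSet δ (Set.univ : Set X)
  have hS : S.Finite := Set.encard_ne_top_iff.mp (by rwa [Metric.encard_maximalSeparatedSet hfin])
  have := hS.fintype
  have hsep : Metric.IsSeparated δ S := Metric.isSeparated_maximalSeparatedSet
  have hcov := Metric.isCover_iff_subset_iUnion_closedBall.mp
    (Metric.isCover_maximalSeparatedSet hfin)
  let e := Fintype.equivFin S
  refine ⟨_, fun i => (e.symm i : X), fun i j hij => ?_, fun x => ?_⟩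
  · have h := hsep (e.symm i).2 (e.symm j).2 (Subtype.coe_injective.ne (e.symm.injective.ne hij))
    simpa [edist_dist, ENNReal.lt_ofReal_iff_toReal_lt] using h
  · obtain ⟨y, hy, hxy⟩ := Set.mem_iUnion₂.mp (hcov (Set.mem_univ x))
    exact ⟨e ⟨y, hy⟩, by simpa using hxy⟩

variable {X : Type*} [PseudoMetricSpace X] {M : ℕ} {v : Fin M → X} {δ : ℝ}

/-- The closed `δ`-ball around the centre `v i`, deprived of the open `δ/2`-balls around the other
centres. -/
def perforatedBall (v : Fin M → X) (δ : ℝ) (i : Fin M) : Set X :=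
  Metric.closedBall (v i) δ \ ⋃ j ∈ univ.erase i, Metric.ball (v j) (δ / 2)

/-- A Voronoi-like decomposition into disjoint sets: the cell of the centre `v i` lies in the
`δ`-ball around `v i`, and contains the `δ/2`-ball if the centres are `δ`-separated. -/
def cell (v : Fin M → X) (δ : ℝ) : Fin M → Set X :=
  disjointed (perforatedBall v δ)

lemma cell_subset_closedBall (i : Fin M) : cell v δ i ⊆ Metric.closedBall (v i) δ :=
  (disjointed_subset _ i).trans Set.sdiff_subset

lemma disjoint_ball_perforatedBall {i j : Fin M} (hij : i ≠ j) :
    Disjoint (Metric.ball (v i) (δ / 2)) (perforatedBall v δ j) :=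
  Set.disjoint_sdiff_right.mono_left
    (Set.subset_biUnion_of_mem (u := fun i => Metric.ball (v i) (δ / 2)) (by simpa using hij))

lemma ball_subset_perforatedBall (hδ : 0 ≤ δ) (hv : ∀ i j, i ≠ j → δ < dist (v i) (v j))
    (i : Fin M) : Metric.ball (v i) (δ / 2) ⊆ perforatedBall v δ i := by
  refine Set.subset_sdiff.mpr
    ⟨(Metric.ball_subset_ball (half_le_self hδ)).trans Metric.ball_subset_closedBall,
      Set.disjoint_iUnion₂_right.mpr fun j hj => Metric.ball_disjoint_ball ?_⟩
  linarith [hv i j (ne_of_mem_erase hj).symm]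

lemma ball_subset_cell (hδ : 0 ≤ δ) (hv : ∀ i j, i ≠ j → δ < dist (v i) (v j)) (i : Fin M) :
    Metric.ball (v i) (δ / 2) ⊆ cell v δ i := by
  rw [cell, disjointed_apply]
  refine Set.subset_sdiff.mpr ⟨ball_subset_perforatedBall hδ hv i, ?_⟩
  rw [sup_set_eq_biUnion]
  exact Set.disjoint_iUnion₂_right.mpr fun j hj =>
    disjoint_ball_perforatedBall (mem_Iio.mp hj).ne'

lemma iUnion_cell (hδ : 0 ≤ δ) (hv : ∀ i j, i ≠ j → δ < dist (v i) (v j))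
    (hcov : ∀ x, ∃ i, dist x (v i) ≤ δ) : ⋃ i, cell v δ i = Set.univ := by
  simp only [cell]
  rw [iUnion_disjointed, Set.iUnion_eq_univ_iff]
  intro x
  by_cases hx : ∃ i, x ∈ Metric.ball (v i) (δ / 2)
  · obtain ⟨i, hi⟩ := hx
    exact ⟨i, ball_subset_perforatedBall hδ hv i hi⟩
  · obtain ⟨i, hi⟩ := hcov x
    exact ⟨i, hi, fun h => hx (by simpa using ⟨_, (Set.mem_iUnion₂.mp h).choose_spec.2⟩)⟩

lemma null_frontier_cell [MeasurableSpace X] {μ : Measure X}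
    (hμ : ∀ x r, μ (Metric.sphere x r) = 0) (i : Fin M) : μ (frontier (cell v δ i)) = 0 := by
  have hball : ∀ j, μ (frontier (perforatedBall v δ j)) = 0 := fun j =>
    null_frontier_diff (null_frontier_closedBall (hμ _ _))
      (null_frontier_biUnion _ fun _ _ => null_frontier_ball (hμ _ _))
  exact disjointedRec (p := fun s => μ (frontier s) = 0)
    (fun _ j hs => null_frontier_diff hs (hball j)) (hball i)

lemma exists_cell_subset_closedBall_three_mul [PreconnectedSpace X] (hδ : 0 ≤ δ)
    (hcov : ∀ x, ∃ i, dist x (v i) ≤ δ) (S : Finset (Fin M)) (hS : S.Nonempty)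
    (hSuniv : S ≠ univ) :
    ∃ i ∈ S, ∃ j ∉ S, cell v δ j ⊆ Metric.closedBall (v i) (3 * δ) := by
  let U : Finset (Fin M) → Set X := fun T => ⋃ i ∈ T, Metric.closedBall (v i) δ
  have hUclosed : ∀ T, IsClosed (U T) := fun T =>
    T.finite_toSet.isClosed_biUnion fun i _ => Metric.isClosed_closedBall
  have hUne : ∀ {T : Finset (Fin M)}, T.Nonempty → (Set.univ ∩ U T).Nonempty := fun ⟨i, hi⟩ =>
    ⟨v i, trivial, Set.mem_biUnion hi (Metric.mem_closedBall_self hδ)⟩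
  have hUcov : Set.univ ⊆ U S ∪ U Sᶜ := fun x _ => by
    obtain ⟨i, hi⟩ := hcov x
    by_cases hiS : i ∈ S
    · exact Or.inl (Set.mem_biUnion hiS hi)
    · exact Or.inr (Set.mem_biUnion (mem_compl.mpr hiS) hi)
  obtain ⟨x, -, hxS, hxS'⟩ := isPreconnected_closed_iff.mp isPreconnected_univ _ _
    (hUclosed S) (hUclosed Sᶜ) hUcov (hUne hS)
    (hUne (by simpa [nonempty_iff_ne_empty] using hSuniv))
  obtain ⟨i, hi, hxi⟩ := Set.mem_iUnion₂.mp hxS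
  obtain ⟨j, hj, hxj⟩ := Set.mem_iUnion₂.mp hxS'
  refine ⟨i, hi, j, mem_compl.mp hj, (cell_subset_closedBall j).trans
    (Metric.closedBall_subset_closedBall' ?_)⟩
  rw [Metric.mem_closedBall] at hxi hxj
  linarith [dist_triangle_left (v j) (v i) x]

end Cells

section AreaRegular

variable {X : Type*} [PseudoMetricSpace X] [MeasurableSpace X] [BorelSpace X]
  {μ : Measure X} [IsProbabilityMeasure μ] {N : ℕ} {δ : ℝ}

lemma hasTiles_univ [CompactSpace X] [PreconnectedSpace X] [Nonempty X] (hN : N ≠ 0)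
    (hδ : 0 < δ) (hμ : ∀ x r, μ (Metric.sphere x r) = 0)
    (hball : ∀ x, (N : ℝ)⁻¹ ≤ μ.real (Metric.ball x (δ / 2))) :
    HasTiles μ (N : ℝ)⁻¹ (Set.range fun c => Metric.closedBall c (3 * δ)) N Set.univ := by
  obtain ⟨x₀⟩ := ‹Nonempty X›
  obtain ⟨M, v, hsep, hcov⟩ := exists_separated_cover (X := X) hδ
  have : Nonempty (Fin M) := ⟨(hcov x₀).choose⟩
  have htiles := hasTiles_iUnion (m := (N : ℝ)⁻¹) (B := fun i => Metric.closedBall (v i) (3 * δ))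
    (K := N) (hμ x₀) (by positivity) (fun i => null_frontier_cell hμ i) (disjoint_disjointed _)
    (fun i => (hball _).trans (measureReal_mono (ball_subset_cell hδ.le hsep i)))
    (fun i => (cell_subset_closedBall i).trans (Metric.closedBall_subset_closedBall (by linarith)))
    (exists_cell_subset_closedBall_three_mul hδ.le hcov)
    (by rw [iUnion_cell hδ.le hsep hcov]; simp [hN])
  exact htiles.mono (Set.range_subset_iff.mpr fun i => ⟨v i, rfl⟩) (Set.subset_univ _)

lemma iUnion_closure_eq_univ [μ.IsOpenPosMeasure] {R : Fin N → Set X} (hN : N ≠ 0)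
    (hdisj : Pairwise (Function.onFun Disjoint R)) (hR : ∀ i, μ (frontier (R i)) = 0)
    (hm : ∀ i, μ.real (R i) = (N : ℝ)⁻¹) : ⋃ i, closure (R i) = Set.univ := by
  have hfull : μ.real (⋃ i, R i) = 1 := by
    rw [measureReal_def, measure_iUnion₀ (fun i j hij => (hdisj hij).aedisjoint)
      fun i => nullMeasurableSet_of_null_frontier (hR i), tsum_fintype,
      ENNReal.toReal_sum fun i _ => measure_ne_top μ _]
    simp [← measureReal_def, hm, hN]
  have hclosed : IsClosed (⋃ i, closure (R i)) :=
    isClosed_iUnion_of_finite fun i => isClosed_closure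
  rw [← Set.compl_empty_iff]
  refine hclosed.isOpen_compl.eq_empty_of_measure_zero (μ := μ) ?_
  rw [prob_compl_eq_zero_iff hclosed.measurableSet, ← ENNReal.toReal_eq_one_iff]
  exact le_antisymm measureReal_le_one
    (hfull.ge.trans (measureReal_mono (Set.iUnion_mono fun i => subset_closure)))

theorem exists_area_regular_partition [CompactSpace X] [PreconnectedSpace X] [Nonempty X]
    [μ.IsOpenPosMeasure] (hN : N ≠ 0) (hδ : 0 < δ) (hμ : ∀ x r, μ (Metric.sphere x r) = 0)
    (hball : ∀ x, (N : ℝ)⁻¹ ≤ μ.real (Metric.ball x (δ / 2))) :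
    ∃ R : Fin N → Set X, (∀ i, IsClosed (R i)) ∧ ⋃ i, R i = Set.univ ∧
      Pairwise (Function.onFun (AEDisjoint μ) R) ∧ (∀ i, μ.real (R i) = (N : ℝ)⁻¹) ∧
      ∀ i, ∃ c, R i ⊆ Metric.closedBall c (3 * δ) := by
  obtain ⟨ι, _, R, hcard, hdisj, hR⟩ := hasTiles_univ hN hδ hμ hball
  let e : Fin N ≃ ι := (Fintype.equivFinOfCardEq hcard).symm
  have hdisj' : Pairwise (Function.onFun Disjoint (R ∘ e)) := hdisj.comp_of_injective e.injective
  refine ⟨fun i => closure (R (e i)), fun i => isClosed_closure,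
    iUnion_closure_eq_univ hN hdisj' (fun i => (hR (e i)).2.1) (fun i => (hR (e i)).2.2.1),
    fun i j hij => (hdisj' hij).aedisjoint.congr (closure_ae_eq_of_null_frontier (hR _).2.1)
      (closure_ae_eq_of_null_frontier (hR _).2.1), fun i => ?_, fun i => ?_⟩
  · rw [measureReal_congr (closure_ae_eq_of_null_frontier (hR _).2.1)]
    exact (hR _).2.2.1
  · obtain ⟨-, -, -, _, ⟨c, rfl⟩, hc⟩ := hR (e i)
    exact ⟨c, closure_minimal hc Metric.isClosed_closedBall⟩

end AreaRegular

section RandomPoints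

open ProbabilityTheory

variable {X ι : Type*} [PseudoMetricSpace X] [CompactSpace X] [MeasurableSpace X] [BorelSpace X]
  {k : X → X → ℝ}

lemma integrable_of_continuous (ν : Measure X) [IsFiniteMeasure ν] {f : X → ℝ}
    (hf : Continuous f) : Integrable f ν :=
  hf.integrable_of_hasCompactSupport (HasCompactSupport.of_compactSpace f)

lemma continuous_integral_kernel (hk : Continuous (Function.uncurry k)) (ν : Measure X)
    [IsFiniteMeasure ν] :
    Continuous fun a => ∫ b, k a b ∂ν := by
  simpa using continuous_parametric_integral_of_continuous (μ := ν) hk isCompact_univ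

section Energy

variable [Fintype ι] (ν : ι → Measure X) [∀ i, IsProbabilityMeasure (ν i)]

lemma integral_pi_kernel_of_ne (hk : Continuous (Function.uncurry k)) {i j : ι} (hij : i ≠ j) :
    ∫ x, k (x i) (x j) ∂Measure.pi ν = ∫ a, ∫ b, k a b ∂ν j ∂ν i := by
  have hpair : (Measure.pi ν).map (fun x => (x i, x j)) = (ν i).prod (ν j) := by
    have hindep := (iIndepFun_pi (μ := ν) (X := fun _ => id) fun _ => aemeasurable_id).indepFun hij
    have hmap := (indepFun_iff_map_prod_eq_prod_map_map
      (measurable_pi_apply i).aemeasurable (measurable_pi_apply j).aemeasurable).1 hindep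
    simpa only [id, (measurePreserving_eval ν _).map_eq] using hmap
  calc ∫ x, k (x i) (x j) ∂Measure.pi ν
      = ∫ z, Function.uncurry k z ∂(Measure.pi ν).map (fun x => (x i, x j)) :=
        (integral_map (by fun_prop : Measurable fun x : ι → X => (x i, x j)).aemeasurable
          hk.aestronglyMeasurable).symm
    _ = ∫ a, ∫ b, k a b ∂ν j ∂ν i := by
        rw [hpair, integral_prod _ (integrable_of_continuous _ hk)]
        rfl

lemma integral_pi_energy (hk : Continuous (Function.uncurry k)) :
    ∫ x, ∑ i, ∑ j, k (x i) (x j) ∂Measure.pi ν =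
      ∑ i, ∑ j, ∫ a, ∫ b, k a b ∂ν j ∂ν i +
        ∑ i, (∫ a, k a a ∂ν i - ∫ a, ∫ b, k a b ∂ν i ∂ν i) := by
  classical
  have hdiag : Continuous fun a => k a a := hk.comp₂ continuous_id continuous_id
  have hint (i j : ι) : Integrable (fun x : ι → X => k (x i) (x j)) (Measure.pi ν) :=
    integrable_of_continuous _ (hk.comp₂ (continuous_apply i) (continuous_apply j))
  have hpair (i j : ι) : ∫ x, k (x i) (x j) ∂Measure.pi ν =
      ∫ a, ∫ b, k a b ∂ν j ∂ν i +
        if i = j then ∫ a, k a a ∂ν i - ∫ a, ∫ b, k a b ∂ν i ∂ν i else 0 := by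
    split_ifs with hij
    · rw [← hij, add_sub_cancel]
      exact integral_comp_eval (μ := ν) (i := i) hdiag.aestronglyMeasurable
    · rw [integral_pi_kernel_of_ne ν hk hij, add_zero]
  rw [integral_finsetSum _ fun i _ => integrable_finsetSum _ fun j _ => hint i j,
    ← sum_add_distrib]
  refine sum_congr rfl fun i _ => ?_
  rw [integral_finsetSum _ fun j _ => hint i j]
  simp only [hpair, sum_add_distrib, sum_ite_eq, mem_univ, if_true]

end Energy

lemma integral_diagonal_sub_le (hk : Continuous (Function.uncurry k)) {ν : Measure X}
    [IsProbabilityMeasure ν] {s : Set X} {ε : ℝ}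
    (hs : ∀ᵐ a ∂ν, a ∈ s) (hε : ∀ a ∈ s, ∀ b ∈ s, k a a - k a b ≤ ε) :
    ∫ a, k a a ∂ν - ∫ a, ∫ b, k a b ∂ν ∂ν ≤ ε := by
  have hrow (a : X) : Continuous (k a) := hk.comp₂ continuous_const continuous_id
  have hdiag : Integrable (fun a => k a a) ν :=
    integrable_of_continuous _ (hk.comp₂ continuous_id continuous_id)
  have hmean : Integrable (fun a => ∫ b, k a b ∂ν) ν :=
    integrable_of_continuous _ (continuous_integral_kernel hk ν)
  have hpoint (a : X) (ha : a ∈ s) : k a a - ∫ b, k a b ∂ν ≤ ε := by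
    have hle : ∫ _, (k a a - ε) ∂ν ≤ ∫ b, k a b ∂ν :=
      integral_mono_ae (integrable_const _) (integrable_of_continuous _ (hrow a))
        (hs.mono fun b hb => by linarith [hε a ha b hb])
    rw [integral_const, probReal_univ, one_smul] at hle
    linarith
  calc ∫ a, k a a ∂ν - ∫ a, ∫ b, k a b ∂ν ∂ν
      = ∫ a, (k a a - ∫ b, k a b ∂ν) ∂ν := (integral_sub hdiag hmean).symm
    _ ≤ ∫ _, ε ∂ν := integral_mono_ae (hdiag.sub hmean) (integrable_const _) (hs.mono hpoint)
    _ = ε := by simp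

lemma sum_integral_cond {μ : Measure X} [IsFiniteMeasure μ] {N : ℕ} {R : Fin N → Set X}
    (hclosed : ∀ i, IsClosed (R i)) (hcover : ⋃ i, R i = Set.univ)
    (hdisj : Pairwise (Function.onFun (AEDisjoint μ) R))
    (hmeas : ∀ i, μ.real (R i) = (N : ℝ)⁻¹) {f : X → ℝ} (hf : Continuous f) :
    ∑ i, ∫ x, f x ∂μ[|R i] = N * ∫ x, f x ∂μ := by
  have hcond (i : Fin N) : ∫ x, f x ∂μ[|R i] = N * ∫ x in R i, f x ∂μ := by
    rw [ProbabilityTheory.cond, integral_smul_measure, ENNReal.toReal_inv, ← measureReal_def,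
      hmeas, inv_inv, smul_eq_mul]
  simp only [hcond]
  rw [← mul_sum, ← tsum_fintype (L := .unconditional _),
    ← integral_iUnion_ae (fun i => (hclosed i).nullMeasurableSet) hdisj
      (integrable_of_continuous _ hf).integrableOn, hcover, setIntegral_univ]

/-- If each `x i` is drawn from `R i` uniformly and independently, the expected energy is `N²` times
the double integral of `k`, which vanishes, plus a correction from the `N` diagonal terms. -/
theorem exists_points_energy_le {μ : Measure X} [IsFiniteMeasure μ] {N : ℕ} {R : Fin N → Set X}
    (hclosed : ∀ i, IsClosed (R i)) (hcover : ⋃ i, R i = Set.univ)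
    (hdisj : Pairwise (Function.onFun (AEDisjoint μ) R))
    (hmeas : ∀ i, μ.real (R i) = (N : ℝ)⁻¹) (hk : Continuous (Function.uncurry k))
    (hmean : ∀ a, ∫ b, k a b ∂μ = 0) {ε : ℝ}
    (hε : ∀ i, ∀ a ∈ R i, ∀ b ∈ R i, k a a - k a b ≤ ε) :
    ∃ x : Fin N → X, (∀ i, x i ∈ R i) ∧ ∑ i, ∑ j, k (x i) (x j) ≤ N * ε := by
  have hprob (i : Fin N) : IsProbabilityMeasure μ[|R i] := by
    have hNpos : (N : ℝ)⁻¹ ≠ 0 := inv_ne_zero (Nat.cast_ne_zero.2 i.pos.ne')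
    refine cond_isProbabilityMeasure fun hzero => hNpos ?_
    rw [← hmeas i, measureReal_def, hzero, ENNReal.toReal_zero]
  have hmem (i : Fin N) : ∀ᵐ a ∂μ[|R i], a ∈ R i := ae_cond_mem (hclosed i).measurableSet
  have hrow (a : X) : Continuous (k a) := hk.comp₂ continuous_const continuous_id
  have hpi : ∀ᵐ x ∂Measure.pi fun i => μ[|R i], ∀ i, x i ∈ R i :=
    ae_all_iff.2 fun i => (measurePreserving_eval (fun i => μ[|R i]) i).quasiMeasurePreserving.ae
      (hmem i)
  have hint : Integrable (fun x : Fin N → X => ∑ i, ∑ j, k (x i) (x j))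
      (Measure.pi fun i => μ[|R i]) :=
    integrable_of_continuous _ <| continuous_finsetSum _ fun i _ => continuous_finsetSum _
      fun j _ => hk.comp₂ (continuous_apply i) (continuous_apply j)
  obtain ⟨x, hx, hle⟩ := exists_notMem_null_le_integral hint hpi
  refine ⟨x, not_not.1 hx, hle.trans ?_⟩
  have hoff (i : Fin N) : ∑ j, ∫ a, ∫ b, k a b ∂μ[|R j] ∂μ[|R i] = 0 := by
    rw [← integral_finsetSum _ fun j _ =>
      integrable_of_continuous _ (continuous_integral_kernel hk _)]
    simp only [sum_integral_cond hclosed hcover hdisj hmeas (hrow _), hmean, mul_zero,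
      integral_zero]
  rw [integral_pi_energy _ hk, sum_congr rfl fun i _ => hoff i, sum_const_zero, zero_add]
  calc ∑ i, (∫ a, k a a ∂μ[|R i] - ∫ a, ∫ b, k a b ∂μ[|R i] ∂μ[|R i])
      ≤ ∑ _ : Fin N, ε := sum_le_sum fun i _ => integral_diagonal_sub_le hk (hmem i) (hε i)
    _ = N * ε := by simp

end RandomPoints

section SphereMeasure

open scoped Pointwise

lemma muSph_apply {d : ℕ} {s : Set (Sph d)} (hs : MeasurableSet s) :
    muSph d s = (volume (Metric.ball (0 : Euc d) 1))⁻¹ *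
      volume (Set.Ioo (0 : ℝ) 1 • ((↑) '' s : Set (Euc d))) := by
  have hdim : (Module.finrank ℝ (Euc d) : ENNReal) ≠ 0 := by simp
  have hdim' : (Module.finrank ℝ (Euc d) : ENNReal) ≠ ⊤ := ENNReal.natCast_ne_top _
  rw [muSph, Measure.smul_apply, smul_eq_mul, Measure.toSphere_apply' _ hs,
    Measure.toSphere_apply_univ, ENNReal.mul_inv (.inl hdim) (.inl hdim'), mul_assoc, mul_left_comm,
    ← mul_assoc _ _ (volume _), ENNReal.inv_mul_cancel hdim hdim', one_mul]

instance isProbabilityMeasure_muSph (d : ℕ) : IsProbabilityMeasure (muSph d) :=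
  ⟨ENNReal.inv_mul_cancel (Measure.measure_univ_ne_zero.2 (Measure.toSphere_ne_zero _))
    (measure_ne_top _ _)⟩

instance isOpenPosMeasure_muSph (d : ℕ) : (muSph d).IsOpenPosMeasure :=
  Measure.isOpenPosMeasure_smul _ (ENNReal.inv_ne_zero.2 (measure_ne_top _ _))

instance nonempty_sph (d : ℕ) : Nonempty (Sph d) :=
  (NormedSpace.sphere_nonempty.2 zero_le_one).to_subtype

lemma preconnectedSpace_sph {d : ℕ} (hd : 1 ≤ d) : PreconnectedSpace (Sph d) := by
  refine Subtype.preconnectedSpace (isPreconnected_sphere ?_ 0 1)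
  rw [← Module.finrank_eq_rank, finrank_euclideanSpace_fin]
  exact_mod_cast Nat.lt_succ_of_le hd

lemma exists_inner_eq {d : ℕ} (hd : 1 ≤ d) (x : Sph d) {t : ℝ} (ht : t ∈ Set.Icc (-1) 1) :
    ∃ y : Sph d, ⟪(x : Euc d), (y : Euc d)⟫ = t := by
  have := preconnectedSpace_sph hd
  have hcont : Continuous fun y : Sph d => ⟪(x : Euc d), (y : Euc d)⟫ := by fun_prop
  exact mem_range_of_exists_le_of_exists_ge hcont ⟨-x, by simpa using ht.1⟩
    ⟨x, by simpa using ht.2⟩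

lemma one_sub_inner_eq {d : ℕ} (x y : Sph d) :
    1 - ⟪(x : Euc d), (y : Euc d)⟫ = dist x y ^ 2 / 2 := by
  rw [Subtype.dist_eq, dist_eq_norm, norm_sub_sq_real]
  simp only [norm_eq_of_mem_sphere]
  ring

section Null

variable {E : Type*} [NormedAddCommGroup E] [NormedSpace ℝ E] [FiniteDimensional ℝ E]
  [MeasurableSpace E] [BorelSpace E] (μ : Measure E) [μ.IsAddHaarMeasure]

lemma finite_quadratic_eq_zero {a : ℝ} (ha : a ≠ 0) (b c : ℝ) :
    {s : ℝ | a * s ^ 2 + b * s + c = 0}.Finite := by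
  have hp : Polynomial.C a * .X ^ 2 + .C b * .X + .C c ≠ 0 := fun hzero => by
    simpa [hzero] using Polynomial.degree_quadratic (b := b) (c := c) ha
  simpa [Polynomial.IsRoot] using Polynomial.finite_setOfPred_isRoot hp

lemma addHaar_quadraticForm_eq_zero {Q : QuadraticForm ℝ E} (hcont : Continuous Q) (hQ : Q ≠ 0) :
    μ {z | Q z = 0} = 0 := by
  obtain ⟨w, hw⟩ : ∃ w, Q w ≠ 0 := by
    contrapose! hQ
    exact QuadraticMap.ext hQ
  have hline (z : E) :
      ∀ᵐ s : ℝ, z + LinearMap.toSpanSingleton ℝ E w s ∈ {z | Q z = 0}ᶜ := by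
    refine measure_mono_null (fun s hs => ?_)
      ((finite_quadratic_eq_zero hw (QuadraticMap.polar Q z w) (Q z)).measure_zero volume)
    have hs : Q (z + s • w) = 0 := not_not.1 hs
    rw [QuadraticMap.map_add Q, QuadraticMap.map_smul, QuadraticMap.polar_smul_right,
      smul_eq_mul, smul_eq_mul] at hs
    rw [Set.mem_ofPred_eq, ← hs]
    ring
  have hae := ae_mem_of_ae_add_linearMap_mem _ volume μ
    (isClosed_singleton.preimage hcont).isOpen_compl.measurableSet hline
  simpa [ae_iff] using hae

end Null

lemma volume_circularCone {d : ℕ} (hd : 1 ≤ d) (x : Sph d) (t : ℝ) :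
    volume {z : Euc d | ⟪(x : Euc d), z⟫ = t * ‖z‖} = 0 := by
  let Q : QuadraticForm ℝ (Euc d) :=
    QuadraticMap.linMulLin (innerₗ (Euc d) x) (innerₗ (Euc d) x) -
      t ^ 2 • LinearMap.BilinMap.toQuadraticMap (innerₗ (Euc d))
  have hQ_apply (z : Euc d) : Q z = ⟪(x : Euc d), z⟫ ^ 2 - (t * ‖z‖) ^ 2 := by
    simp [Q, sq, mul_mul_mul_comm]
  have hQ : Q ≠ 0 := by
    intro hzero
    obtain ⟨v, hv⟩ := exists_inner_eq hd x (t := 0) (by norm_num)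
    have hQx := hQ_apply x
    have hQv := hQ_apply v
    simp only [hzero, zero_apply, inner_self_eq_norm_sq_to_K, norm_eq_of_mem_sphere,
      Real.ringHom_apply, one_pow, mul_one, hv, ne_eq, OfNat.ofNat_ne_zero, not_false_eq_true,
      zero_pow, zero_sub, zero_eq_neg, pow_eq_zero_iff] at hQx hQv
    simp [hQv] at hQx
  have hcont : Continuous Q := by
    simp only [funext hQ_apply]
    fun_prop
  refine measure_mono_null (fun z hz => ?_) (addHaar_quadraticForm_eq_zero volume hcont hQ)
  rw [Set.mem_ofPred_eq, hQ_apply, hz, sub_self]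

lemma muSph_sphere {d : ℕ} (hd : 1 ≤ d) (x : Sph d) (r : ℝ) : muSph d (Metric.sphere x r) = 0 := by
  have hcone : Set.Ioo (0 : ℝ) 1 • ((↑) '' Metric.sphere x r) ⊆
      {z : Euc d | ⟪(x : Euc d), z⟫ = (1 - r ^ 2 / 2) * ‖z‖} := by
    rintro _ ⟨s, hs, _, ⟨y, hy, rfl⟩, rfl⟩
    have hinner := one_sub_inner_eq x y
    rw [dist_comm, Metric.mem_sphere.1 hy] at hinner
    simp only [Set.mem_ofPred_eq, inner_smul_right, norm_smul, norm_eq_of_mem_sphere,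
      Real.norm_of_nonneg hs.1.le]
    linear_combination -s * hinner
  rw [muSph_apply Metric.isClosed_sphere.measurableSet,
    measure_mono_null hcone (volume_circularCone hd x _), mul_zero]

section Cap

variable {E : Type*} [NormedAddCommGroup E] [NormedSpace ℝ E]

lemma ball_smul_subset_cone (x : Metric.sphere (0 : E) 1) {r s : ℝ} (hr : r ≤ 2)
    (hs : s ∈ Set.Icc (1 / 2) (3 / 4)) :
    Metric.ball (s • (x : E)) (r / 16) ⊆ Set.Ioo (0 : ℝ) 1 • ((↑) '' Metric.ball x r) := by
  intro z hz
  rw [mem_ball_iff_norm] at hz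
  have hnorm : |‖z‖ - s| ≤ ‖z - s • (x : E)‖ := by
    simpa [norm_smul, abs_of_nonneg (by linarith [hs.1] : 0 ≤ s)] using
      abs_norm_sub_norm_le z (s • (x : E))
  have hz_lower : 3 / 8 ≤ ‖z‖ := by linarith [(abs_le.1 hnorm).1, hs.1]
  have hz_pos : 0 < ‖z‖ := by linarith
  have hz_lt : ‖z‖ < 1 := by linarith [(abs_le.1 hnorm).2, hs.2]
  have hproj : ‖‖z‖⁻¹ • z - x‖ < r := by
    calc ‖‖z‖⁻¹ • z - x‖
        = ‖z‖⁻¹ * ‖(z - s • (x : E)) + (s - ‖z‖) • (x : E)‖ := by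
          rw [← norm_smul_of_nonneg (by positivity), sub_smul, sub_add_sub_cancel, smul_sub,
            inv_smul_smul₀ hz_pos.ne']
      _ ≤ ‖z‖⁻¹ * (‖z - s • (x : E)‖ + ‖z - s • (x : E)‖) := by
          gcongr
          refine (norm_add_le _ _).trans ?_
          rw [norm_smul, norm_eq_of_mem_sphere, mul_one, Real.norm_eq_abs, abs_sub_comm]
          gcongr
      _ < r := by
          rw [inv_mul_lt_iff₀ hz_pos]
          nlinarith [norm_nonneg (z - s • (x : E))]
  refine ⟨‖z‖, ⟨hz_pos, hz_lt⟩, ‖z‖⁻¹ • z, ⟨⟨‖z‖⁻¹ • z, ?_⟩, ?_, rfl⟩, smul_inv_smul₀ hz_pos.ne' z⟩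
  · simp [norm_smul, hz_pos.ne']
  · simpa [Subtype.dist_eq, dist_eq_norm] using hproj

lemma pairwise_disjoint_ball_smul {x : E} (hx : ‖x‖ = 1) (a ρ : ℝ) :
    Pairwise (Function.onFun Disjoint fun k : ℕ => Metric.ball ((a + 2 * ρ * k) • x) ρ) := by
  intro k l hkl
  have hgap : (1 : ℝ) ≤ |(k : ℝ) - l| := by
    exact_mod_cast Int.one_le_abs (sub_ne_zero.2 (Nat.cast_injective.ne hkl : (k : ℤ) ≠ l))
  rcases le_or_gt ρ 0 with hρ | hρ
  · simp [Function.onFun, Metric.ball_eq_empty.2 hρ]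
  · refine Metric.ball_disjoint_ball ?_
    rw [dist_eq_norm, ← sub_smul, norm_smul, hx, mul_one, Real.norm_eq_abs,
      show a + 2 * ρ * k - (a + 2 * ρ * l) = 2 * ρ * (k - l) by ring, abs_mul,
      abs_of_pos (by positivity)]
    nlinarith

lemma cone_subset_ball (s : Set (Metric.sphere (0 : E) 1)) :
    Set.Ioo (0 : ℝ) 1 • ((↑) '' s) ⊆ Metric.ball (0 : E) 1 := by
  rintro _ ⟨t, ht, _, ⟨y, -, rfl⟩, rfl⟩
  simpa [norm_smul, abs_of_pos ht.1] using ht.2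

end Cap

/-- The cone over a cap of radius `r` contains about `1 / r` disjoint balls of radius `r / 16`
lined up along its axis, which gives the exponent `d` instead of the `d + 1` of a single ball. -/
lemma le_muSph_ball_of_le_two {d : ℕ} (x : Sph d) {r : ℝ} (hr : 0 < r) (hr2 : r ≤ 2) :
    r ^ d / 16 ^ (d + 1) ≤ (muSph d).real (Metric.ball x r) := by
  let V := volume.real (Metric.ball (0 : Euc d) 1)
  have hV : 0 < V := ENNReal.toReal_pos (Metric.measure_ball_pos _ _ one_pos).ne' (by finiteness)
  let K := ⌈1 / r⌉₊
  let B : ℕ → Set (Euc d) := fun k =>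
    Metric.ball ((1 / 2 + 2 * (r / 16) * k) • (x : Euc d)) (r / 16)
  have hsub : ⋃ k ∈ range K, B k ⊆ Set.Ioo (0 : ℝ) 1 • ((↑) '' Metric.ball x r) := by
    refine Set.iUnion₂_subset fun k hk => ball_smul_subset_cone x hr2 ⟨?_, ?_⟩
    · exact le_add_of_nonneg_right (by positivity)
    · have hk : (k : ℝ) * r < 1 := (lt_div_iff₀ hr).1 (Nat.lt_ceil.1 (mem_range.1 hk))
      linarith
  have hball (k : ℕ) : volume.real (B k) = (r / 16) ^ (d + 1) * V := by
    rw [measureReal_def, Measure.addHaar_ball_of_pos _ _ (by positivity), ENNReal.toReal_mul,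
      ENNReal.toReal_ofReal (by positivity), finrank_euclideanSpace_fin]
    rfl
  have hvol : volume.real (⋃ k ∈ range K, B k) = K * ((r / 16) ^ (d + 1) * V) := by
    rw [measureReal_biUnion_finset (f := B)
      ((pairwise_disjoint_ball_smul (norm_eq_of_mem_sphere x) _ _).set_pairwise _)
      fun _ _ => measurableSet_ball]
    simp only [hball, sum_const, card_range, nsmul_eq_mul]
  calc r ^ d / 16 ^ (d + 1) = V⁻¹ * (1 / r * ((r / 16) ^ (d + 1) * V)) := by
        rw [div_pow, pow_succ r]
        field_simp
    _ ≤ V⁻¹ * (K * ((r / 16) ^ (d + 1) * V)) := by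
        gcongr
        exact Nat.le_ceil _
    _ ≤ (muSph d).real (Metric.ball x r) := by
        rw [measureReal_def, muSph_apply measurableSet_ball, ENNReal.toReal_mul,
          ENNReal.toReal_inv, ← hvol]
        exact mul_le_mul_of_nonneg_left (measureReal_mono hsub
          (measure_ne_top_of_subset (cone_subset_ball _) (by finiteness))) (by positivity)

lemma le_muSph_ball {d : ℕ} (x : Sph d) {r : ℝ} (hr : 0 < r) (hr1 : r ^ d / 16 ^ (d + 1) ≤ 1) :
    r ^ d / 16 ^ (d + 1) ≤ (muSph d).real (Metric.ball x r) := by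
  rcases le_or_gt r 2 with hr2 | hr2
  · exact le_muSph_ball_of_le_two x hr hr2
  · have hball : Metric.ball x r = Set.univ := Set.eq_univ_of_forall fun y => by
      have := norm_sub_le (y : Euc d) (x : Euc d)
      simp only [norm_eq_of_mem_sphere] at this
      rw [Metric.mem_ball, Subtype.dist_eq, dist_eq_norm]
      linarith
    rwa [hball, probReal_univ]

end SphereMeasure

section HarmonicPolynomials

open MvPolynomial

variable {d : ℕ} {p : MvPolynomial (Fin (d + 1)) ℝ} {k : ℕ}

/-- The linear form `y ↦ ⟪a, y⟫` as a polynomial. -/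
noncomputable def linearForm (a : Euc d) : MvPolynomial (Fin (d + 1)) ℝ :=
  ∑ i, C (a i) * X i

/-- The polynomial `y ↦ ‖y‖ ^ 2`. -/
noncomputable def normSqPoly (d : ℕ) : MvPolynomial (Fin (d + 1)) ℝ :=
  ∑ i, X i ^ 2

/-- The derivative of polynomials in the direction `a`. -/
noncomputable def dirDeriv (a : Euc d) :
    Derivation ℝ (MvPolynomial (Fin (d + 1)) ℝ) (MvPolynomial (Fin (d + 1)) ℝ) :=
  ∑ i, a i • pderiv i

/-- The Laplacian `polyLaplacian` as a linear map. -/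
noncomputable def laplacian (d : ℕ) :
    MvPolynomial (Fin (d + 1)) ℝ →ₗ[ℝ] MvPolynomial (Fin (d + 1)) ℝ :=
  ∑ i, (pderiv i).toLinearMap ∘ₗ (pderiv i).toLinearMap

/-- The space of harmonic homogeneous polynomials of degree `k`; its restriction to the sphere is
`sphHarmonic d k`. -/
noncomputable def harmonicPolynomials (d k : ℕ) : Submodule ℝ (MvPolynomial (Fin (d + 1)) ℝ) :=
  homogeneousSubmodule (Fin (d + 1)) ℝ k ⊓ LinearMap.ker (laplacian d)

lemma eval_linearForm (a x : Euc d) : eval (fun i => x i) (linearForm a) = ⟪a, x⟫ := by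
  simp [linearForm, PiLp.inner_apply, mul_comm]

lemma eval_normSqPoly (x : Euc d) : eval (fun i => x i) (normSqPoly d) = ‖x‖ ^ 2 := by
  simp [normSqPoly, EuclideanSpace.real_norm_sq_eq]

lemma eval_smul_of_isHomogeneous (hp : p.IsHomogeneous k) (r : ℝ) (x : Euc d) :
    eval (fun i => (r • x) i) p = r ^ k * eval (fun i => x i) p := by
  simp only [PiLp.smul_apply, smul_eq_mul, eval_eq', mul_pow, prod_mul_distrib, mul_sum]
  refine sum_congr rfl fun m hm => ?_
  have hdeg : ∑ i, m i = k := by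
    rw [← Finsupp.degree_eq_sum, Finsupp.degree_eq_weight_one]
    exact hp (mem_support_iff.mp hm)
  rw [prod_pow_eq_pow_sum, hdeg]
  ring

lemma isHomogeneous_linearForm (a : Euc d) : (linearForm a).IsHomogeneous 1 :=
  IsHomogeneous.sum _ _ _ fun i _ => (isHomogeneous_X ℝ i).C_mul (a i)

lemma isHomogeneous_normSqPoly : (normSqPoly d).IsHomogeneous 2 :=
  IsHomogeneous.sum _ _ _ fun i _ => isHomogeneous_X_pow i 2

lemma exists_eq_C_of_isHomogeneous_zero (hp : p.IsHomogeneous 0) : ∃ c, p = C c :=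
  ⟨_, totalDegree_eq_zero_iff_eq_C.mp (Nat.le_zero.mp hp.totalDegree_le)⟩

lemma dirDeriv_apply (a : Euc d) (p : MvPolynomial (Fin (d + 1)) ℝ) :
    dirDeriv a p = ∑ i, C (a i) * pderiv i p := by
  exact (congrFun (map_sum Derivation.coeFnAddMonoidHom (fun i => a i • pderiv i) univ) p).trans
    (by simp [smul_eq_C_mul])

lemma dirDeriv_X (a : Euc d) (i : Fin (d + 1)) : dirDeriv a (X i) = C (a i) := by
  simp [dirDeriv_apply, pderiv_X, Pi.single_apply]

lemma dirDeriv_C_mul (a : Euc d) (c : ℝ) (p : MvPolynomial (Fin (d + 1)) ℝ) :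
    dirDeriv a (C c * p) = C c * dirDeriv a p := by
  rw [C_mul', Derivation.map_smul, ← C_mul']

lemma linearForm_single (i : Fin (d + 1)) :
    linearForm (EuclideanSpace.single i (1 : ℝ)) = X i := by
  simp [linearForm, apply_ite C]

lemma dirDeriv_single (i : Fin (d + 1)) :
    dirDeriv (EuclideanSpace.single i (1 : ℝ)) = pderiv i :=
  derivation_ext fun j => by simp [dirDeriv_X, pderiv_X, Pi.single_apply, apply_ite C]

lemma dirDeriv_linearForm (a b : Euc d) : dirDeriv a (linearForm b) = C ⟪a, b⟫ := by
  simp [linearForm, dirDeriv_X, PiLp.inner_apply]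

lemma dirDeriv_normSqPoly (a : Euc d) : dirDeriv a (normSqPoly d) = C 2 * linearForm a := by
  simp only [normSqPoly, linearForm, map_sum, Derivation.leibniz_pow, dirDeriv_X, mul_sum]
  exact sum_congr rfl fun i _ => by simp [map_ofNat C 2, mul_comm]

lemma isHomogeneous_dirDeriv (a : Euc d) (hp : p.IsHomogeneous k) :
    (dirDeriv a p).IsHomogeneous (k - 1) := by
  rw [dirDeriv_apply]
  exact IsHomogeneous.sum _ _ _ fun i _ => hp.pderiv.C_mul (a i)

lemma eval_dirDeriv_self (a : Euc d) (hp : p.IsHomogeneous k) :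
    eval (fun i => a i) (dirDeriv a p) = k * eval (fun i => a i) p := by
  simpa [dirDeriv_apply] using congrArg (eval fun i => a i) hp.sum_X_mul_pderiv

lemma dirDeriv_comm (a b : Euc d) (p : MvPolynomial (Fin (d + 1)) ℝ) :
    dirDeriv a (dirDeriv b p) = dirDeriv b (dirDeriv a p) := by
  have hcomm : ⁅dirDeriv a, dirDeriv b⁆ = 0 :=
    derivation_ext fun i => by simp [Derivation.commutator_apply, dirDeriv_X]
  simpa [Derivation.commutator_apply, sub_eq_zero] using DFunLike.congr_fun hcomm p

lemma laplacian_apply (p : MvPolynomial (Fin (d + 1)) ℝ) : laplacian d p = polyLaplacian d p := by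
  simp [laplacian, polyLaplacian]

lemma laplacian_C_mul (c : ℝ) (p : MvPolynomial (Fin (d + 1)) ℝ) :
    laplacian d (C c * p) = C c * laplacian d p := by
  rw [C_mul', map_smul, ← C_mul']

lemma laplacian_dirDeriv (a : Euc d) (p : MvPolynomial (Fin (d + 1)) ℝ) :
    laplacian d (dirDeriv a p) = dirDeriv a (laplacian d p) := by
  simp [laplacian, ← dirDeriv_single, dirDeriv_comm _ a]

lemma laplacian_linearForm_mul (a : Euc d) (p : MvPolynomial (Fin (d + 1)) ℝ) :
    laplacian d (linearForm a * p) = linearForm a * laplacian d p + C 2 * dirDeriv a p := by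
  simp only [laplacian_apply, polyLaplacian, ← dirDeriv_single, Derivation.leibniz, smul_eq_mul,
    dirDeriv_linearForm, map_add, derivation_C, mul_sum, ← sum_add_distrib, dirDeriv_apply a,
    map_ofNat, EuclideanSpace.inner_single_left]
  exact sum_congr rfl fun i _ => by
    simp only [Real.ringHom_apply, one_mul, mul_zero, zero_add]
    ring

lemma laplacian_normSqPoly_mul (hp : p.IsHomogeneous k) :
    laplacian d (normSqPoly d * p) =
      normSqPoly d * laplacian d p + C (2 * ((d : ℝ) + 1) + 4 * k) * p := by
  have hleibniz (i : Fin (d + 1)) : pderiv i (pderiv i (normSqPoly d * p)) =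
      normSqPoly d * pderiv i (pderiv i p) + 4 * (X i * pderiv i p) + 2 * p := by
    have htwo : pderiv i (2 : MvPolynomial (Fin (d + 1)) ℝ) = 0 := by
      rw [← map_ofNat C 2, pderiv_C]
    have hnorm : pderiv i (normSqPoly d) = 2 * X i := by
      rw [← dirDeriv_single, dirDeriv_normSqPoly, linearForm_single, map_ofNat]
    simp only [Derivation.leibniz, hnorm, map_add, smul_eq_mul, htwo, pderiv_X_self]
    ring
  simp only [laplacian_apply, polyLaplacian, hleibniz, sum_add_distrib, ← mul_sum,
    hp.sum_X_mul_pderiv]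
  simp only [nsmul_eq_mul, sum_const, card_univ, Fintype.card_fin, Nat.cast_add, Nat.cast_one,
    C_add, C_mul, map_ofNat C, map_natCast, C_1]
  ring

lemma mem_harmonicPolynomials :
    p ∈ harmonicPolynomials d k ↔ p.IsHomogeneous k ∧ laplacian d p = 0 :=
  Iff.rfl

lemma dirDeriv_mem_harmonicPolynomials (a : Euc d) (hp : p ∈ harmonicPolynomials d (k + 1)) :
    dirDeriv a p ∈ harmonicPolynomials d k :=
  ⟨isHomogeneous_dirDeriv a hp.1, by
    rw [SetLike.mem_coe, LinearMap.mem_ker, laplacian_dirDeriv, hp.2, map_zero]⟩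

lemma mem_sphHarmonic_iff (f : SphFun d) :
    f ∈ sphHarmonic d k ↔ ∃ p ∈ harmonicPolynomials d k,
      ∀ x : Sph d, f x = eval (fun i => (x : Euc d) i) p := by
  simp [sphHarmonic, mem_harmonicPolynomials, laplacian_apply, and_assoc]

end HarmonicPolynomials

section ZonalPolynomials

open MvPolynomial

variable {d : ℕ}

/-- The zonal harmonic of degree `k` with pole `a`: the homogenization of
`y ↦ gegenbauer ((d - 1) / 2) k ⟪a, y⟫`, obtained by inserting `‖y‖ ^ 2` in the second term of the
three-term recurrence. -/
noncomputable def zonal (a : Euc d) : ℕ → MvPolynomial (Fin (d + 1)) ℝ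
  | 0 => 1
  | 1 => C ((d : ℝ) - 1) * linearForm a
  | k + 2 => C ((2 * (k : ℝ) + d + 1) / ((k : ℝ) + 2)) * (linearForm a * zonal a (k + 1)) -
      C (((k : ℝ) + d - 1) / ((k : ℝ) + 2)) * (normSqPoly d * zonal a k)

lemma zonal_zero (a : Euc d) : zonal a 0 = 1 := rfl

lemma zonal_one (a : Euc d) : zonal a 1 = C ((d : ℝ) - 1) * linearForm a := rfl

lemma isHomogeneous_zonal (a : Euc d) : ∀ k, (zonal a k).IsHomogeneous k
  | 0 => isHomogeneous_one (Fin (d + 1)) ℝ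
  | 1 => (isHomogeneous_linearForm a).C_mul _
  | k + 2 => by
      have hlinear := (isHomogeneous_linearForm a).mul (isHomogeneous_zonal a (k + 1))
      have hnormSq := isHomogeneous_normSqPoly.mul (isHomogeneous_zonal a k)
      rw [show 1 + (k + 1) = k + 2 by ring] at hlinear
      rw [add_comm 2 k] at hnormSq
      exact (hlinear.C_mul _).sub (hnormSq.C_mul _)

lemma eval_zonal (a x : Euc d) (hx : ‖x‖ = 1) : ∀ k,
    eval (fun i => x i) (zonal a k) = (gegenbauer (((d : ℝ) - 1) / 2) k).eval ⟪a, x⟫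
  | 0 => by simp [zonal, gegenbauer]
  | 1 => by
      simp only [zonal, gegenbauer, map_mul, eval_C, eval_linearForm, Polynomial.eval_mul,
        Polynomial.eval_C, Polynomial.eval_X]
      ring
  | k + 2 => by
      simp only [zonal, gegenbauer, map_sub, map_mul, eval_C, eval_linearForm, eval_normSqPoly, hx,
        eval_zonal a x hx k, eval_zonal a x hx (k + 1), Polynomial.eval_sub, Polynomial.eval_mul,
        Polynomial.eval_C, Polynomial.eval_X]
      ring

lemma mul_zonal_add_two (a : Euc d) (k : ℕ) :
    C ((k : ℝ) + 2) * zonal a (k + 2) =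
      C (2 * (k : ℝ) + d + 1) * (linearForm a * zonal a (k + 1)) -
        C ((k : ℝ) + d - 1) * (normSqPoly d * zonal a k) := by
  have hk : (k : ℝ) + 2 ≠ 0 := by positivity
  rw [zonal, mul_sub, ← mul_assoc (C _) (C _), ← mul_assoc (C _) (C _), ← C_mul, ← C_mul,
    mul_div_cancel₀ _ hk, mul_div_cancel₀ _ hk]

lemma mul_dirDeriv_zonal_add_two (a : Euc d) (ha : ‖a‖ = 1) (k : ℕ) :
    C ((k : ℝ) + 2) * dirDeriv a (zonal a (k + 2)) =
      C (2 * (k : ℝ) + d + 1) *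
          (zonal a (k + 1) + linearForm a * dirDeriv a (zonal a (k + 1))) -
        C ((k : ℝ) + d - 1) *
          (C 2 * linearForm a * zonal a k + normSqPoly d * dirDeriv a (zonal a k)) := by
  have h := congrArg (dirDeriv a) (mul_zonal_add_two a k)
  rw [dirDeriv_C_mul, map_sub, dirDeriv_C_mul, dirDeriv_C_mul, Derivation.leibniz,
    Derivation.leibniz, dirDeriv_linearForm, dirDeriv_normSqPoly, real_inner_self_eq_norm_sq, ha,
    one_pow, C_1] at h
  rw [h]
  simp only [smul_eq_mul]
  ring

lemma dirDeriv_zonal_succ (a : Euc d) (ha : ‖a‖ = 1) : ∀ k : ℕ,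
    dirDeriv a (zonal a (k + 1)) = C ((k : ℝ) + d - 1) * zonal a k
  | 0 => by simp [zonal, dirDeriv_linearForm, ha]
  | 1 => by
      have hrec := mul_dirDeriv_zonal_add_two a ha 0
      rw [dirDeriv_zonal_succ a ha 0] at hrec
      refine mul_left_cancel₀ (C_ne_zero.mpr (two_ne_zero' ℝ)) ?_
      have hzero : dirDeriv a 1 = 0 := Derivation.map_one_eq_zero _
      simp only [hzero, zonal_zero, zonal_one, zero_add, Nat.cast_zero, Nat.cast_one, map_add,
        map_sub, map_mul, map_natCast, map_ofNat, map_one, map_zero] at hrec ⊢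
      linear_combination hrec
  | k + 2 => by
      have hrec := mul_dirDeriv_zonal_add_two a ha (k + 1)
      rw [dirDeriv_zonal_succ a ha (k + 1), dirDeriv_zonal_succ a ha k] at hrec
      have hk : (k : ℝ) + 1 + 2 ≠ 0 := by positivity
      refine mul_left_cancel₀ (C_ne_zero.mpr hk) ?_
      have hzonal := mul_zonal_add_two a k
      simp only [Nat.cast_add, Nat.cast_one, Nat.cast_ofNat, map_add, map_sub, map_mul,
        map_natCast, map_ofNat, map_one] at hrec hzonal ⊢
      linear_combination hrec - ((k : MvPolynomial (Fin (d + 1)) ℝ) + d) * hzonal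

lemma laplacian_zonal (a : Euc d) (ha : ‖a‖ = 1) : ∀ k, laplacian d (zonal a k) = 0
  | 0 => by simp [zonal_zero, laplacian]
  | 1 => by
      have hlinear : laplacian d (linearForm a) = 0 := by
        simpa [laplacian] using laplacian_linearForm_mul a 1
      rw [zonal_one, laplacian_C_mul, hlinear, mul_zero]
  | k + 2 => by
      have hk : (k : ℝ) + 2 ≠ 0 := by positivity
      refine mul_left_cancel₀ (C_ne_zero.mpr hk) ?_
      rw [← laplacian_C_mul, mul_zonal_add_two, map_sub, laplacian_C_mul, laplacian_C_mul,
        laplacian_linearForm_mul, laplacian_normSqPoly_mul (isHomogeneous_zonal a k),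
        laplacian_zonal a ha (k + 1), laplacian_zonal a ha k, dirDeriv_zonal_succ a ha k]
      simp only [C_add, C_mul, map_ofNat C, map_natCast, C_1, mul_zero, C_sub, zero_add]
      ring

lemma zonal_mem_harmonicPolynomials (a : Sph d) (k : ℕ) :
    zonal (a : Euc d) k ∈ harmonicPolynomials d k :=
  ⟨isHomogeneous_zonal _ k, laplacian_zonal _ (norm_eq_of_mem_sphere a) k⟩

end ZonalPolynomials

section SphericalMean

open MvPolynomial

variable {d k : ℕ} {p : MvPolynomial (Fin (d + 1)) ℝ}

lemma continuous_eval_euc (p : MvPolynomial (Fin (d + 1)) ℝ) :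
    Continuous fun x : Euc d => eval (fun i => x i) p :=
  (continuous_eval p).comp (by fun_prop)

lemma continuous_eval_sph (p : MvPolynomial (Fin (d + 1)) ℝ) :
    Continuous fun y : Sph d => eval (fun i => (y : Euc d) i) p :=
  (continuous_eval_euc p).comp continuous_subtype_val

/-- The mean of a polynomial over the unit sphere. -/
noncomputable def sphMean (d : ℕ) : MvPolynomial (Fin (d + 1)) ℝ →ₗ[ℝ] ℝ where
  toFun p := ∫ y : Sph d, eval (fun i => (y : Euc d) i) p ∂muSph d
  map_add' p q := by
    simp only [map_add]
    exact integral_add (integrable_of_continuous _ (continuous_eval_sph p))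
      (integrable_of_continuous _ (continuous_eval_sph q))
  map_smul' c p := by simp only [smul_eval, integral_const_mul, RingHom.id_apply, smul_eq_mul]

lemma sphMean_apply (p : MvPolynomial (Fin (d + 1)) ℝ) :
    sphMean d p = ∫ y : Sph d, eval (fun i => (y : Euc d) i) p ∂muSph d := rfl

lemma sphMean_C_mul (c : ℝ) (p : MvPolynomial (Fin (d + 1)) ℝ) :
    sphMean d (C c * p) = c * sphMean d p := by
  rw [C_mul', map_smul, smul_eq_mul]

lemma sphMean_normSqPoly_mul (p : MvPolynomial (Fin (d + 1)) ℝ) :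
    sphMean d (normSqPoly d * p) = sphMean d p := by
  simp only [sphMean_apply, map_mul, eval_normSqPoly, norm_eq_of_mem_sphere, one_pow, one_mul]

lemma hasLineDerivAt_eval (p : MvPolynomial (Fin (d + 1)) ℝ) (x a : Euc d) :
    HasLineDerivAt ℝ (fun y : Euc d => eval (fun i => y i) p)
      (eval (fun i => x i) (dirDeriv a p)) x a := by
  unfold HasLineDerivAt
  induction p using MvPolynomial.induction_on with
  | C c => simpa only [eval_C, derivation_C, map_zero] using hasDerivAt_const (0 : ℝ) c
  | add p q hp hq => simpa only [map_add] using hp.fun_add hq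
  | mul_X p j hp =>
      have hX : HasDerivAt (fun t : ℝ => (x + t • a) j) (a j) 0 := by
        simpa using ((hasDerivAt_id (0 : ℝ)).mul_const (a j)).const_add (x j)
      refine (hp.mul hX).congr_deriv ?_ |>.congr_of_eventuallyEq (.of_forall fun t => ?_)
      · simp only [Derivation.leibniz, dirDeriv_X, smul_eq_mul, map_add, map_mul, eval_C, eval_X,
          zero_smul, add_zero]
        ring
      · simp only [map_mul, eval_X, Pi.mul_apply]

lemma hasLineDerivAt_exp_neg_norm_sq (x a : Euc d) :
    HasLineDerivAt ℝ (fun y : Euc d => Real.exp (-‖y‖ ^ 2))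
      (-2 * ⟪a, x⟫ * Real.exp (-‖x‖ ^ 2)) x a := by
  have hnorm := hasLineDerivAt_eval (normSqPoly d) x a
  simp only [eval_normSqPoly, dirDeriv_normSqPoly, map_mul, eval_C, eval_linearForm] at hnorm
  refine (HasDerivAt.exp (HasDerivAt.neg hnorm)).congr_deriv ?_
  simp only [Pi.neg_apply, zero_smul, add_zero]
  ring

/-- The `k`-th absolute moment of the Gaussian weight `exp (-‖x‖ ^ 2)` on `ℝ^{d+1}`. -/
noncomputable def gaussianMoment (d k : ℕ) : ℝ :=
  ∫ x : Euc d, ‖x‖ ^ k * Real.exp (-‖x‖ ^ 2)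

lemma gaussianMoment_eq (d k : ℕ) :
    gaussianMoment d k = (d + 1) * volume.real (Metric.ball (0 : Euc d) 1) *
      (1 / 2 * Real.Gamma ((d + k + 1) / 2)) := by
  have hradial := integral_rpow_mul_exp_neg_rpow (p := 2) (q := ((d + k : ℕ) : ℝ)) two_pos
    (neg_one_lt_zero.trans_le (Nat.cast_nonneg _))
  have hpolar := integral_fun_norm_addHaar (volume : Measure (Euc d))
    fun r => r ^ k * Real.exp (-r ^ 2)
  push_cast at hradial
  rw [gaussianMoment, hpolar, ← hradial, finrank_euclideanSpace_fin]
  simp only [Nat.add_sub_cancel, nsmul_eq_mul, smul_eq_mul, ← mul_assoc, ← pow_add,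
    Real.rpow_ofNat, ← Nat.cast_add, Real.rpow_natCast, Nat.cast_succ]

lemma gaussianMoment_pos (d k : ℕ) : 0 < gaussianMoment d k := by
  have hball : 0 < volume.real (Metric.ball (0 : Euc d) 1) :=
    ENNReal.toReal_pos (Metric.measure_ball_pos _ _ one_pos).ne' measure_ball_lt_top.ne
  have : 0 < Real.Gamma (((d : ℝ) + k + 1) / 2) := Real.Gamma_pos_of_pos (by positivity)
  rw [gaussianMoment_eq]
  positivity

lemma two_mul_gaussianMoment_add_two (d k : ℕ) :
    2 * gaussianMoment d (k + 2) = (d + k + 1) * gaussianMoment d k := by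
  have hshift : ((d : ℝ) + (k + 2 : ℕ) + 1) / 2 = (d + k + 1) / 2 + 1 := by push_cast; ring
  rw [gaussianMoment_eq, gaussianMoment_eq, hshift, Real.Gamma_add_one (by positivity)]
  ring

lemma integrable_norm_pow_mul_exp_neg_norm_sq (d k : ℕ) :
    Integrable fun x : Euc d => ‖x‖ ^ k * Real.exp (-‖x‖ ^ 2) :=
  not_imp_comm.1 integral_undef (gaussianMoment_pos d k).ne'

lemma exists_eq_norm_smul (x : Euc d) : ∃ y : Sph d, x = ‖x‖ • (y : Euc d) := by
  obtain rfl | hx := eq_or_ne x 0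
  · exact ⟨Classical.arbitrary _, by simp⟩
  · exact ⟨⟨‖x‖⁻¹ • x, by simp [norm_smul, hx]⟩, by simp [smul_smul, hx]⟩

lemma exists_abs_eval_le (hp : p.IsHomogeneous k) :
    ∃ M, ∀ x : Euc d, |eval (fun i => x i) p| ≤ M * ‖x‖ ^ k := by
  obtain ⟨M, hM⟩ := isCompact_univ.exists_bound_of_continuousOn (continuous_eval_sph p).continuousOn
  refine ⟨M, fun x => ?_⟩
  obtain ⟨y, hy⟩ := exists_eq_norm_smul x
  calc |eval (fun i => x i) p| = |eval (fun i => (‖x‖ • (y : Euc d)) i) p| := by rw [← hy]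
    _ = |eval (fun i => (y : Euc d) i) p| * ‖x‖ ^ k := by
        rw [eval_smul_of_isHomogeneous hp, abs_mul, abs_pow, abs_norm, mul_comm]
    _ ≤ M * ‖x‖ ^ k := by gcongr; exact hM y (Set.mem_univ y)

lemma integrable_eval_mul_exp_neg_norm_sq (hp : p.IsHomogeneous k) :
    Integrable fun x : Euc d => eval (fun i => x i) p * Real.exp (-‖x‖ ^ 2) := by
  obtain ⟨M, hM⟩ := exists_abs_eval_le hp
  refine ((integrable_norm_pow_mul_exp_neg_norm_sq d k).const_mul M).mono'
    ((continuous_eval_euc p).mul (by fun_prop)).aestronglyMeasurable (.of_forall fun x => ?_)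
  rw [norm_mul, Real.norm_eq_abs, Real.norm_of_nonneg (Real.exp_pos _).le, ← mul_assoc]
  exact mul_le_mul_of_nonneg_right (hM x) (Real.exp_pos _).le

lemma integral_eq_integral_toSphere_mul {F : Euc d → ℝ} {f : Sph d → ℝ} {g : ℝ → ℝ}
    (hF : ∀ (y : Sph d) (r : ℝ), 0 < r → F (r • (y : Euc d)) = f y * g r) :
    ∫ x, F x = (∫ y, f y ∂(volume : Measure (Euc d)).toSphere) *
      ∫ r : Set.Ioi (0 : ℝ), g r ∂Measure.volumeIoiPow d := by
  calc ∫ x, F x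
      = ∫ x : ({0}ᶜ : Set (Euc d)), F x ∂(volume : Measure (Euc d)).comap (↑) := by
        rw [integral_subtype_comap (measurableSet_singleton _).compl F, restrict_compl_singleton]
    _ = ∫ z : Sph d × Set.Ioi (0 : ℝ), f z.1 * g z.2
          ∂(volume : Measure (Euc d)).toSphere.prod (.volumeIoiPow d) := by
        have hpolar := (volume : Measure (Euc d)).measurePreserving_homeomorphUnitSphereProd
        rw [finrank_euclideanSpace_fin, Nat.add_sub_cancel] at hpolar
        rw [← hpolar.integral_comp (Homeomorph.measurableEmbedding _)]
        refine integral_congr_ae (.of_forall fun x => ?_)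
        have hx : 0 < ‖(x : Euc d)‖ := norm_pos_iff.2 x.2
        simpa [smul_smul, hx.ne'] using hF (homeomorphUnitSphereProd _ x).1 _ hx
    _ = _ := integral_prod_mul f fun r : Set.Ioi (0 : ℝ) => g r

lemma integral_eq_integral_muSph_mul {F : Euc d → ℝ} {f : Sph d → ℝ} {g : ℝ → ℝ}
    (hF : ∀ (y : Sph d) (r : ℝ), 0 < r → F (r • (y : Euc d)) = f y * g r) :
    ∫ x, F x = (∫ y, f y ∂muSph d) * ∫ x : Euc d, g ‖x‖ := by
  have hσ : (volume : Measure (Euc d)).toSphere.real Set.univ ≠ 0 :=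
    (measureReal_ne_zero_iff).2 (Measure.measure_univ_ne_zero.2 (Measure.toSphere_ne_zero _))
  have hradial : ∫ x : Euc d, g ‖x‖ = (volume : Measure (Euc d)).toSphere.real Set.univ *
      ∫ r : Set.Ioi (0 : ℝ), g r ∂Measure.volumeIoiPow d := by
    rw [integral_eq_integral_toSphere_mul (f := fun _ => 1) (g := g) fun y r hr => by
      rw [norm_smul, norm_eq_of_mem_sphere, Real.norm_of_nonneg hr.le, mul_one, one_mul],
      integral_const, smul_eq_mul, mul_one]
  rw [integral_eq_integral_toSphere_mul hF, hradial, muSph, integral_smul_measure,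
    ENNReal.toReal_inv, smul_eq_mul, mul_mul_mul_comm, ← measureReal_def, mul_comm _ (_ * _)]
  field_simp

lemma integral_eval_mul_exp_neg_norm_sq (hp : p.IsHomogeneous k) :
    ∫ x : Euc d, eval (fun i => x i) p * Real.exp (-‖x‖ ^ 2) =
      sphMean d p * gaussianMoment d k := by
  rw [sphMean_apply, gaussianMoment]
  refine integral_eq_integral_muSph_mul
    (F := fun x => eval (fun i => x i) p * Real.exp (-‖x‖ ^ 2))
    (f := fun y => eval (fun i => (y : Euc d) i) p)
    (g := fun r => r ^ k * Real.exp (-r ^ 2)) fun y r hr => ?_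
  rw [eval_smul_of_isHomogeneous hp, norm_smul, norm_eq_of_mem_sphere, Real.norm_of_nonneg hr.le,
    mul_one]
  ring

lemma integral_eval_dirDeriv_mul_exp_neg_norm_sq (hp : p.IsHomogeneous k) (a : Euc d) :
    ∫ x : Euc d, eval (fun i => x i) (dirDeriv a p) * Real.exp (-‖x‖ ^ 2) =
      2 * ∫ x : Euc d, eval (fun i => x i) (linearForm a * p) * Real.exp (-‖x‖ ^ 2) := by
  have hlinear := integrable_eval_mul_exp_neg_norm_sq ((isHomogeneous_linearForm a).mul hp)
  have hweight (x : Euc d) :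
      eval (fun i => x i) p * (-2 * ⟪a, x⟫ * Real.exp (-‖x‖ ^ 2)) =
        -2 * (eval (fun i => x i) (linearForm a * p) * Real.exp (-‖x‖ ^ 2)) := by
    rw [map_mul, eval_linearForm]
    ring
  have hparts := integral_bilinear_hasLineDerivAt_right_eq_neg_left_of_integrable
    (μ := (volume : Measure (Euc d))) (B := ContinuousLinearMap.mul ℝ ℝ)
    (by simpa using integrable_eval_mul_exp_neg_norm_sq (isHomogeneous_dirDeriv a hp))
    (by simpa only [ContinuousLinearMap.mul_apply', hweight] using hlinear.const_mul (-2))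
    (by simpa using integrable_eval_mul_exp_neg_norm_sq hp)
    (fun x _ => hasLineDerivAt_eval p x a) (fun x _ => hasLineDerivAt_exp_neg_norm_sq x a)
  simp only [ContinuousLinearMap.mul_apply', hweight, integral_const_mul] at hparts
  linarith

lemma sphMean_dirDeriv (hp : p.IsHomogeneous k) (a : Euc d) :
    sphMean d (dirDeriv a p) = (k + d) * sphMean d (linearForm a * p) := by
  have hparts := integral_eval_dirDeriv_mul_exp_neg_norm_sq hp a
  rw [integral_eval_mul_exp_neg_norm_sq (isHomogeneous_dirDeriv a hp),
    integral_eval_mul_exp_neg_norm_sq ((isHomogeneous_linearForm a).mul hp), add_comm 1] at hparts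
  cases k with
  | zero =>
      obtain ⟨c, rfl⟩ := exists_eq_C_of_isHomogeneous_zero hp
      simp_all [(gaussianMoment_pos d 1).ne']
  | succ k =>
      rw [Nat.add_sub_cancel] at hparts
      refine mul_right_cancel₀ (gaussianMoment_pos d k).ne' ?_
      have := two_mul_gaussianMoment_add_two d k
      push_cast
      linear_combination hparts + sphMean d (linearForm a * p) * this

end SphericalMean

section Orthogonality

open MvPolynomial

variable {d k l : ℕ} {p q : MvPolynomial (Fin (d + 1)) ℝ}

/-- Green's formula on the sphere. Its right-hand side is symmetric in `p` and `q` while the factor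
`k` on the left is not, whence the orthogonality of harmonics of different degrees. -/
lemma mul_sphMean_mul (hp : p ∈ harmonicPolynomials d k) (hq : q.IsHomogeneous l) :
    ((k : ℝ) + l - 1 + d) * k * sphMean d (p * q) =
      sphMean d (∑ i, pderiv i p * pderiv i q) := by
  obtain ⟨hpk, hpΔ⟩ := mem_harmonicPolynomials.1 hp
  cases k with
  | zero =>
      obtain ⟨c, rfl⟩ := exists_eq_C_of_isHomogeneous_zero hpk
      simp
  | succ k =>
      have hparts (i : Fin (d + 1)) : sphMean d (pderiv i (pderiv i p * q)) =
          (((k + l : ℕ) : ℝ) + d) * sphMean d (X i * pderiv i p * q) := by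
        simpa only [dirDeriv_single, linearForm_single, mul_assoc, Nat.add_sub_cancel] using
          sphMean_dirDeriv (hpk.pderiv.mul hq) (EuclideanSpace.single i 1)
      have hleibniz : ∑ i, pderiv i (pderiv i p * q) = ∑ i, pderiv i p * pderiv i q := by
        simp only [Derivation.leibniz, sum_add_distrib, smul_eq_mul, ← mul_sum]
        rw [← polyLaplacian, ← laplacian_apply, hpΔ, mul_zero, add_zero]
      rw [← hleibniz, map_sum, sum_congr rfl fun i _ => hparts i, ← mul_sum, ← map_sum, ← sum_mul,
        hpk.sum_X_mul_pderiv, smul_mul_assoc, map_nsmul, nsmul_eq_mul]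
      push_cast
      ring

lemma sphMean_mul_eq_zero (hd : 1 ≤ d) (hkl : k ≠ l) (hp : p ∈ harmonicPolynomials d k)
    (hq : q ∈ harmonicPolynomials d l) : sphMean d (p * q) = 0 := by
  have hpq := mul_sphMean_mul hp hq.1
  have hqp := mul_sphMean_mul hq hp.1
  simp only [mul_comm q, mul_comm (pderiv _ q)] at hqp
  have hpos : (0 : ℝ) < (k : ℝ) + l - 1 + d := by
    have : (1 : ℝ) ≤ k + l := by exact_mod_cast (by omega : 1 ≤ k + l)
    have : (1 : ℝ) ≤ d := by exact_mod_cast hd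
    linarith
  have hdiff : (k : ℝ) - l ≠ 0 := sub_ne_zero.2 (Nat.cast_injective.ne hkl)
  refine (mul_eq_zero.1 ?_).resolve_left (mul_ne_zero hpos.ne' hdiff)
  linear_combination hpq - hqp

lemma sphMean_C (c : ℝ) : sphMean d (C c) = c := by simp [sphMean_apply]

lemma sphMean_zonal_mul (hd : 1 ≤ d) (a : Sph d) {k : ℕ} {q : MvPolynomial (Fin (d + 1)) ℝ}
    (hq : q ∈ harmonicPolynomials d k) :
    (2 * (k : ℝ) + d - 1) * sphMean d (zonal (a : Euc d) k * q) =
      ((d : ℝ) - 1) * eval (fun i => (a : Euc d) i) q := by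
  induction k using Nat.twoStepInduction generalizing q with
  | zero =>
      obtain ⟨c, rfl⟩ := exists_eq_C_of_isHomogeneous_zero hq.1
      simp [zonal_zero, sphMean_C]
  | one =>
      have hparts := sphMean_dirDeriv hq.1 (a : Euc d)
      have heuler := eval_dirDeriv_self (a : Euc d) hq.1
      obtain ⟨c, hc⟩ := exists_eq_C_of_isHomogeneous_zero (isHomogeneous_dirDeriv (a : Euc d) hq.1)
      rw [hc, sphMean_C] at hparts
      rw [hc, eval_C] at heuler
      rw [zonal_one, mul_assoc, sphMean_C_mul]
      push_cast at hparts heuler ⊢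
      linear_combination ((d : ℝ) - 1) * (heuler - hparts)
  | more k _ ih =>
      have horth : sphMean d (zonal (a : Euc d) k * q) = 0 :=
        sphMean_mul_eq_zero hd (by omega) (zonal_mem_harmonicPolynomials a k) hq
      have hparts := sphMean_dirDeriv ((isHomogeneous_zonal (a : Euc d) (k + 1)).mul hq.1) a
      rw [Derivation.leibniz, smul_eq_mul, smul_eq_mul, map_add,
        dirDeriv_zonal_succ _ (norm_eq_of_mem_sphere a), mul_left_comm, sphMean_C_mul,
        mul_comm q, horth] at hparts
      have hrec := congrArg (fun r => sphMean d (r * q)) (mul_zonal_add_two (a : Euc d) k)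
      simp only [sub_mul, mul_assoc, map_sub, sphMean_C_mul, sphMean_normSqPoly_mul, horth]
        at hrec
      have hderiv := ih (dirDeriv_mem_harmonicPolynomials (a : Euc d) hq)
      rw [eval_dirDeriv_self _ hq.1] at hderiv
      refine mul_left_cancel₀ (by positivity : (k : ℝ) + 2 ≠ 0) ?_
      push_cast at hparts hderiv ⊢
      linear_combination (2 * ((k : ℝ) + 2) + d - 1) * hrec -
        (2 * (k : ℝ) + d + 1) * hparts + hderiv

lemma sphMean_zonal_mul_zonal (hd : 1 ≤ d) (a b : Sph d) {k : ℕ} (hk : k ≠ 0) :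
    sphMean d (zonal (a : Euc d) k * zonal (b : Euc d) k) =
      ((d : ℝ) - 1) / (2 * k + d - 1) *
        (gegenbauer (((d : ℝ) - 1) / 2) k).eval ⟪(a : Euc d), (b : Euc d)⟫ := by
  have hpos : (0 : ℝ) < 2 * k + d - 1 := by
    have : (1 : ℝ) ≤ k := by exact_mod_cast Nat.one_le_iff_ne_zero.2 hk
    have : (1 : ℝ) ≤ d := by exact_mod_cast hd
    linarith
  have h := sphMean_zonal_mul hd a (zonal_mem_harmonicPolynomials b k)
  rw [eval_zonal _ _ (norm_eq_of_mem_sphere a), real_inner_comm] at h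
  rw [div_mul_eq_mul_div, eq_div_iff hpos.ne', mul_comm, h]

lemma sphMean_mul_self_nonneg (p : MvPolynomial (Fin (d + 1)) ℝ) : 0 ≤ sphMean d (p * p) := by
  simp only [sphMean_apply, map_mul]
  exact integral_nonneg fun y => mul_self_nonneg _

lemma eval_eq_zero_of_sphMean_mul_self (h : sphMean d (p * p) = 0) (y : Sph d) :
    eval (fun i => (y : Euc d) i) p = 0 := by
  have hcont := continuous_eval_sph (p * p)
  rw [sphMean_apply, integral_eq_zero_iff_of_nonneg
    (fun z => (map_mul (eval _) p p).symm ▸ mul_self_nonneg _)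
    (integrable_of_continuous _ hcont), hcont.ae_eq_iff_eq (muSph d) continuous_zero] at h
  simpa using congrFun h y

lemma eval_eq_zero_of_sum_eval_eq_zero (hd : 1 ≤ d) {s : Finset ℕ}
    {p : ℕ → MvPolynomial (Fin (d + 1)) ℝ} (hp : ∀ j, p j ∈ harmonicPolynomials d j)
    (hsum : ∀ y : Sph d, ∑ j ∈ s, eval (fun i => (y : Euc d) i) (p j) = 0) (hk : k ∈ s)
    (y : Sph d) : eval (fun i => (y : Euc d) i) (p k) = 0 := by
  refine eval_eq_zero_of_sphMean_mul_self ?_ y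
  calc sphMean d (p k * p k) = sphMean d (p k * ∑ j ∈ s, p j) := by
        rw [mul_sum, map_sum, sum_eq_single_of_mem k hk]
        exact fun j _ hjk => sphMean_mul_eq_zero hd hjk.symm (hp k) (hp j)
    _ = 0 := by simp only [sphMean_apply, map_mul, map_sum, hsum, mul_zero, integral_zero]

lemma harmComponent_apply (hd : 1 ≤ d) {n : ℕ} {p : ℕ → MvPolynomial (Fin (d + 1)) ℝ}
    (hp : ∀ j, p j ∈ harmonicPolynomials d j) {P : SphFun d}
    (hP : ∀ y : Sph d, P y = ∑ j ∈ Icc 1 n, eval (fun i => (y : Euc d) i) (p j))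
    (hk : k ∈ Icc 1 n) (y : Sph d) :
    harmComponent d n P k y = eval (fun i => (y : Euc d) i) (p k) := by
  have hex : ∃ c : ℕ → SphFun d, (∀ j, c j ∈ sphHarmonic d j) ∧ P = ∑ j ∈ Icc 1 n, c j :=
    ⟨fun j y => eval (fun i => (y : Euc d) i) (p j),
      fun j => (mem_sphHarmonic_iff _).2 ⟨p j, hp j, fun _ => rfl⟩, by
        ext y; rw [hP, Finset.sum_apply]⟩
  obtain ⟨hharm, hsum⟩ := hex.choose_spec
  choose q hq hchoose using fun j => (mem_sphHarmonic_iff _).1 (hharm j)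
  rw [harmComponent, dif_pos hex, hchoose, ← sub_eq_zero, ← map_sub]
  refine eval_eq_zero_of_sum_eval_eq_zero (p := q - p) hd (fun j => sub_mem (hq j) (hp j))
    (fun z => ?_) hk y
  simp only [Pi.sub_apply, map_sub, sum_sub_distrib, ← hchoose, ← hP]
  rw [sub_eq_zero, ← Finset.sum_apply, ← hsum]

lemma innerW_self (hd : 1 ≤ d) {n : ℕ} {p : ℕ → MvPolynomial (Fin (d + 1)) ℝ}
    (hp : ∀ j, p j ∈ harmonicPolynomials d j) {P : SphFun d}
    (hP : ∀ y : Sph d, P y = ∑ j ∈ Icc 1 n, eval (fun i => (y : Euc d) i) (p j)) :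
    innerW d n P P =
      ∑ k ∈ Icc 1 n, (k : ℝ) * ((k : ℝ) + d - 1) * sphMean d (p k * p k) :=
  sum_congr rfl fun k hk => by
    simp only [harmComponent_apply hd hp hP hk, sphMean_apply, map_mul]

end Orthogonality

section Gegenbauer

open Polynomial

variable {α t : ℝ}

lemma mul_eval_gegenbauer_add_two (α : ℝ) (k : ℕ) (t : ℝ) :
    ((k : ℝ) + 2) * (gegenbauer α (k + 2)).eval t =
      2 * ((k : ℝ) + 1 + α) * t * (gegenbauer α (k + 1)).eval t -
        ((k : ℝ) + 2 * α) * (gegenbauer α k).eval t := by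
  have : (k : ℝ) + 2 ≠ 0 := by positivity
  simp only [gegenbauer, eval_sub, eval_mul, eval_C, eval_X]
  field_simp

lemma mul_eval_derivative_gegenbauer_add_two (α : ℝ) (k : ℕ) (t : ℝ) :
    ((k : ℝ) + 2) * (derivative (gegenbauer α (k + 2))).eval t =
      2 * ((k : ℝ) + 1 + α) *
          ((gegenbauer α (k + 1)).eval t + t * (derivative (gegenbauer α (k + 1))).eval t) -
        ((k : ℝ) + 2 * α) * (derivative (gegenbauer α k)).eval t := by
  have : (k : ℝ) + 2 ≠ 0 := by positivity
  simp only [gegenbauer, derivative_sub, derivative_mul, derivative_C, derivative_X, zero_mul,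
    zero_add, one_mul, eval_sub, eval_add, eval_mul, eval_C, eval_X]
  field_simp

lemma add_mul_eval_gegenbauer_add_two (hα : 0 ≤ α) (t : ℝ) (k : ℕ) :
    ((k : ℝ) + 2 + α) * (gegenbauer α (k + 2)).eval t =
      α * ((gegenbauer (α + 1) (k + 2)).eval t - (gegenbauer (α + 1) k).eval t) := by
  induction k using Nat.twoStepInduction with
  | zero =>
      simp only [gegenbauer, eval_mul, eval_C, eval_X, eval_one, eval_sub]
      push_cast
      ring
  | one =>
      simp only [gegenbauer, eval_mul, eval_C, eval_X, eval_one, eval_sub]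
      push_cast
      ring
  | more k ih₀ ih₁ =>
      have hrec := mul_eval_gegenbauer_add_two α (k + 2) t
      have hrec₀ := mul_eval_gegenbauer_add_two (α + 1) k t
      have hrec₂ := mul_eval_gegenbauer_add_two (α + 1) (k + 2) t
      have hk : ((k : ℝ) + 2 + α) * (k + 4) ≠ 0 := by positivity
      rw [show k + 1 + 2 = k + 2 + 1 by rfl] at ih₁
      push_cast at hrec hrec₀ hrec₂ ih₁ ⊢
      refine mul_left_cancel₀ hk ?_
      linear_combination ((k : ℝ) + 2 + α) * (k + 4 + α) * hrec +
        2 * t * ((k : ℝ) + 2 + α) * (k + 4 + α) * ih₁ - (k + 2 + 2 * α) * (k + 4 + α) * ih₀ -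
        α * ((k : ℝ) + 2 + α) * hrec₂ + α * (k + 4 + α) * hrec₀

lemma eval_derivative_gegenbauer_succ (hα : 0 ≤ α) (t : ℝ) (k : ℕ) :
    (derivative (gegenbauer α (k + 1))).eval t = 2 * α * (gegenbauer (α + 1) k).eval t := by
  induction k using Nat.twoStepInduction with
  | zero => simp [gegenbauer]
  | one =>
      have hrec := mul_eval_derivative_gegenbauer_add_two α 0 t
      simp only [gegenbauer, derivative_C_mul, derivative_X, derivative_one, eval_mul, eval_C,
        eval_X, eval_one, eval_zero] at hrec ⊢
      push_cast at hrec
      linarith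
  | more k ih₀ ih₁ =>
      have hderiv := mul_eval_derivative_gegenbauer_add_two α (k + 1) t
      have hcontig := add_mul_eval_gegenbauer_add_two hα t k
      have hrec := mul_eval_gegenbauer_add_two (α + 1) k t
      rw [ih₀, ih₁] at hderiv
      push_cast at hderiv
      refine mul_left_cancel₀ (by positivity : (k : ℝ) + 3 ≠ 0) ?_
      linear_combination hderiv + 2 * hcontig - 2 * α * hrec

lemma succ_mul_eval_one_gegenbauer_succ (α : ℝ) (k : ℕ) :
    ((k : ℝ) + 1) * (gegenbauer α (k + 1)).eval 1 =
      ((k : ℝ) + 2 * α) * (gegenbauer α k).eval 1 := by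
  induction k with
  | zero => simp [gegenbauer]
  | succ k ih =>
      push_cast
      linear_combination mul_eval_gegenbauer_add_two α k 1 + ih

lemma eval_one_gegenbauer_eq_choose (m k : ℕ) :
    (gegenbauer (((m : ℝ) + 1) / 2) k).eval 1 = (m + k).choose k := by
  induction k with
  | zero => simp [gegenbauer]
  | succ k ih =>
      have hrec := succ_mul_eval_one_gegenbauer_succ (((m : ℝ) + 1) / 2) k
      have hchoose : ((m : ℝ) + k + 1) * (m + k).choose k =
          (m + k + 1).choose (k + 1) * (k + 1) := by
        exact_mod_cast Nat.add_one_mul_choose_eq (m + k) k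
      refine mul_left_cancel₀ (by positivity : (k : ℝ) + 1 ≠ 0) ?_
      rw [← add_assoc]
      linear_combination hrec + (k + m + 1) * ih + hchoose

lemma mul_eval_one_gegenbauer {d : ℕ} (hd : 1 ≤ d) (k : ℕ) :
    ((k : ℝ) + d - 1) * (gegenbauer (((d : ℝ) - 1) / 2) k).eval 1 =
      ((d : ℝ) - 1) * (d + k - 1).choose k := by
  obtain ⟨e, rfl⟩ := Nat.exists_eq_add_of_le' hd
  induction k with
  | zero => simp [gegenbauer]
  | succ k ih =>
      have hrec := succ_mul_eval_one_gegenbauer_succ ((((e + 1 : ℕ) : ℝ) - 1) / 2) k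
      have hchoose : ((e : ℝ) + k + 1) * (e + k).choose k =
          (e + k + 1).choose (k + 1) * (k + 1) := by
        exact_mod_cast Nat.add_one_mul_choose_eq (e + k) k
      rw [show e + 1 + k - 1 = e + k by omega] at ih
      rw [show e + 1 + (k + 1) - 1 = e + k + 1 by omega]
      refine mul_left_cancel₀ (by positivity : (k : ℝ) + 1 ≠ 0) ?_
      push_cast at hrec ih ⊢
      linear_combination ((k : ℝ) + 1 + e) * hrec + ((k : ℝ) + 1 + e) * ih + e * hchoose

lemma abs_eval_gegenbauer_le {d : ℕ} (hd : 2 ≤ d) (k : ℕ) (ht : t ∈ Set.Icc (-1) 1) :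
    |(gegenbauer (((d : ℝ) - 1) / 2) k).eval t| ≤ (gegenbauer (((d : ℝ) - 1) / 2) k).eval 1 := by
  have hd₁ : 1 ≤ d := one_le_two.trans hd
  obtain rfl | hk := eq_or_ne k 0
  · simp [gegenbauer]
  obtain ⟨a⟩ := nonempty_sph d
  obtain ⟨b, hab⟩ := exists_inner_eq hd₁ a ht
  have hba : ⟪(b : Euc d), a⟫ = t := by rw [real_inner_comm, hab]
  have hself (x : Sph d) : ⟪(x : Euc d), x⟫ = 1 := by simp
  have hplus := sphMean_mul_self_nonneg (zonal (a : Euc d) k + zonal b k)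
  have hminus := sphMean_mul_self_nonneg (zonal (a : Euc d) k - zonal b k)
  simp only [mul_add, add_mul, mul_sub, sub_mul, map_add, map_sub,
    sphMean_zonal_mul_zonal hd₁ _ _ hk, hself, hab, hba] at hplus hminus
  have hfactor : 0 < ((d : ℝ) - 1) / (2 * k + d - 1) := by
    have : (2 : ℝ) ≤ d := by exact_mod_cast hd
    exact div_pos (by linarith) (by linarith [k.cast_nonneg (α := ℝ)])
  rw [abs_le]
  constructor <;> nlinarith

lemma eval_one_sub_eval_gegenbauer_le {d : ℕ} (hd : 1 ≤ d) (k : ℕ) (ht : t ∈ Set.Icc (-1) 1) :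
    (gegenbauer (((d : ℝ) - 1) / 2) (k + 1)).eval 1 -
        (gegenbauer (((d : ℝ) - 1) / 2) (k + 1)).eval t ≤
      ((d : ℝ) - 1) * (d + k).choose k * (1 - t) := by
  have hd' : (0 : ℝ) ≤ (d : ℝ) - 1 := sub_nonneg.2 (by exact_mod_cast hd)
  have hderiv (s : ℝ) (hs : s ∈ Set.Icc (-1 : ℝ) 1) :
      ‖(derivative (gegenbauer (((d : ℝ) - 1) / 2) (k + 1))).eval s‖ ≤
        ((d : ℝ) - 1) * (d + k).choose k := by
    have hbound := abs_eval_gegenbauer_le (d := d + 2) (by omega) k hs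
    rw [show (((d + 2 : ℕ) : ℝ) - 1) / 2 = ((d : ℝ) + 1) / 2 by push_cast; ring,
      eval_one_gegenbauer_eq_choose] at hbound
    rw [eval_derivative_gegenbauer_succ (by positivity), norm_mul, mul_div_cancel₀ _ two_ne_zero,
      Real.norm_of_nonneg hd', show ((d : ℝ) - 1) / 2 + 1 = ((d : ℝ) + 1) / 2 by ring]
    exact mul_le_mul_of_nonneg_left hbound hd'
  have hmvt := (convex_Icc (-1 : ℝ) 1).norm_image_sub_le_of_norm_hasDerivWithin_le
    (fun s _ => (Polynomial.hasDerivAt _ s).hasDerivWithinAt) hderiv ht ⟨by norm_num, le_rfl⟩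
  rw [Real.norm_of_nonneg (sub_nonneg.2 ht.2)] at hmvt
  exact (le_abs_self _).trans hmvt

end Gegenbauer

section EnergyKernel

variable {d n k : ℕ} {t : ℝ}

/-- The coefficient `dim H_k / (w_k G_k^α(1))` of `G_k^α` in `g_w`, where `α = (d - 1) / 2`. For
`d = 1` one has `G_k^0(1) = 0` when `1 ≤ k`, so that the coefficient takes the junk value `0`. -/
noncomputable def gwCoeff (d k : ℕ) : ℝ :=
  dimHarm d k / (((k : ℝ) * ((k : ℝ) + d - 1)) * (gegenbauer (((d : ℝ) - 1) / 2) k).eval 1)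

lemma eval_gw (d n : ℕ) (t : ℝ) :
    (gw d n).eval t = ∑ k ∈ Icc 1 n, gwCoeff d k * (gegenbauer (((d : ℝ) - 1) / 2) k).eval t := by
  simp [gw, Polynomial.eval_finsetSum, gwCoeff]

lemma gwCoeff_eq (hd : 1 ≤ d) (hk : 1 ≤ k) :
    gwCoeff d k = (2 * (k : ℝ) + d - 1) / (((d : ℝ) - 1) * (k * ((k : ℝ) + d - 1))) := by
  have hchoose : ((d + k - 1).choose k : ℝ) ≠ 0 := by
    exact_mod_cast (Nat.choose_pos (by omega)).ne'
  rw [gwCoeff, dimHarm, div_mul_eq_mul_div, div_div, mul_left_comm, mul_assoc,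
    mul_eval_one_gegenbauer hd, ← mul_assoc, ← mul_assoc, mul_div_mul_right _ _ hchoose]
  ring_nf

lemma gwCoeff_nonneg (hd : 1 ≤ d) (hk : 1 ≤ k) : 0 ≤ gwCoeff d k := by
  have hd' : (1 : ℝ) ≤ d := by exact_mod_cast hd
  have hk' : (1 : ℝ) ≤ k := by exact_mod_cast hk
  rw [gwCoeff_eq hd hk]
  exact div_nonneg (by linarith)
    (mul_nonneg (by linarith) (mul_nonneg (by linarith) (by linarith)))

lemma gwCoeff_mul_le (hd : 1 ≤ d) (hk : 1 ≤ k) : gwCoeff d k * ((d : ℝ) - 1) ≤ 2 / k := by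
  have hd' : (0 : ℝ) ≤ (d : ℝ) - 1 := sub_nonneg.2 (by exact_mod_cast hd)
  have hk' : (0 : ℝ) < k := by exact_mod_cast hk
  rw [gwCoeff_eq hd hk, div_mul_eq_mul_div]
  refine div_le_of_le_mul₀ (mul_nonneg hd' (mul_nonneg hk'.le (by linarith))) (by positivity) ?_
  field_simp
  nlinarith

/-- The eigenvalue `w_k` of the inner product cancels one of the two factors `gwCoeff d k` in
`⟨G_x, G_y⟩_w`, which is why the `G_x` reproduce their own kernel. -/
lemma weight_mul_gwCoeff_sq (hd : 1 ≤ d) (hk : 1 ≤ k) :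
    (k : ℝ) * ((k : ℝ) + d - 1) * (gwCoeff d k ^ 2 * (((d : ℝ) - 1) / (2 * k + d - 1))) =
      gwCoeff d k := by
  have hd' : (1 : ℝ) ≤ d := by exact_mod_cast hd
  have hk' : (1 : ℝ) ≤ k := by exact_mod_cast hk
  have : (k : ℝ) + d - 1 ≠ 0 := by linarith
  have : 2 * (k : ℝ) + d - 1 ≠ 0 := by linarith
  rw [gwCoeff_eq hd hk]
  obtain hd₁ | hd₁ := eq_or_ne ((d : ℝ) - 1) 0
  · simp [hd₁]
  · field_simp

lemma choose_le_mul_pow (hd : 1 ≤ d) (j : ℕ) :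
    ((d + j).choose j : ℝ) ≤ (d : ℝ) ^ d * ((j : ℝ) + 1) ^ d := by
  have hle : d + j ≤ d * (j + 1) := by nlinarith
  rw [← mul_pow, ← Nat.choose_symm_add]
  exact_mod_cast (Nat.choose_le_pow _ _).trans (Nat.pow_le_pow_left hle d)

lemma gwCoeff_mul_eval_one_sub_le (hd : 1 ≤ d) (hk : k ∈ Icc 1 n) (ht : t ∈ Set.Icc (-1) 1) :
    gwCoeff d k * ((gegenbauer (((d : ℝ) - 1) / 2) k).eval 1 -
        (gegenbauer (((d : ℝ) - 1) / 2) k).eval t) ≤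
      2 * (d : ℝ) ^ d * (n : ℝ) ^ (d - 1) * (1 - t) := by
  obtain ⟨hk₁, hkn⟩ := mem_Icc.1 hk
  obtain ⟨j, rfl⟩ := Nat.exists_eq_add_of_le' hk₁
  have hj : ((j + 1 : ℕ) : ℝ) ≤ n := by exact_mod_cast hkn
  have ht₁ : 0 ≤ 1 - t := sub_nonneg.2 ht.2
  calc _ ≤ gwCoeff d (j + 1) * (((d : ℝ) - 1) * (d + j).choose j * (1 - t)) :=
        mul_le_mul_of_nonneg_left (eval_one_sub_eval_gegenbauer_le hd j ht) (gwCoeff_nonneg hd hk₁)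
    _ = gwCoeff d (j + 1) * ((d : ℝ) - 1) * (d + j).choose j * (1 - t) := by ring
    _ ≤ 2 / ((j + 1 : ℕ) : ℝ) * ((d : ℝ) ^ d * ((j : ℝ) + 1) ^ d) * (1 - t) := by
        gcongr
        · exact gwCoeff_mul_le hd hk₁
        · exact choose_le_mul_pow hd j
    _ = 2 * (d : ℝ) ^ d * ((j + 1 : ℕ) : ℝ) ^ (d - 1) * (1 - t) := by
        rw [← mul_pow_sub_one (Nat.one_le_iff_ne_zero.1 hd) ((j : ℝ) + 1)]
        push_cast
        field_simp
    _ ≤ 2 * (d : ℝ) ^ d * (n : ℝ) ^ (d - 1) * (1 - t) := by gcongr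

lemma eval_one_sub_eval_gw_le (hd : 1 ≤ d) (n : ℕ) (ht : t ∈ Set.Icc (-1) 1) :
    (gw d n).eval 1 - (gw d n).eval t ≤ 2 * (d : ℝ) ^ d * (n : ℝ) ^ d * (1 - t) := by
  simp only [eval_gw, ← sum_sub_distrib, ← mul_sub]
  calc _ ≤ ∑ _k ∈ Icc 1 n, 2 * (d : ℝ) ^ d * (n : ℝ) ^ (d - 1) * (1 - t) :=
        sum_le_sum fun k hk => gwCoeff_mul_eval_one_sub_le hd hk ht
    _ = 2 * (d : ℝ) ^ d * (n : ℝ) ^ d * (1 - t) := by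
        rw [sum_const, Nat.card_Icc, Nat.add_sub_cancel, nsmul_eq_mul,
          ← mul_pow_sub_one (Nat.one_le_iff_ne_zero.1 hd) (n : ℝ)]
        ring

lemma continuous_eval_gw_inner (d n : ℕ) :
    Continuous (Function.uncurry fun x y : Sph d => (gw d n).eval ⟪(x : Euc d), y⟫) := by
  unfold Function.uncurry
  fun_prop

lemma eval_gw_inner (x y : Sph d) :
    (gw d n).eval ⟪(x : Euc d), y⟫ = MvPolynomial.eval (fun i => (y : Euc d) i)
      (∑ k ∈ Icc 1 n, MvPolynomial.C (gwCoeff d k) * zonal (x : Euc d) k) := by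
  simp [eval_gw, eval_zonal]

lemma integral_eval_gw_inner (hd : 1 ≤ d) (n : ℕ) (x : Sph d) :
    ∫ y : Sph d, (gw d n).eval ⟪(x : Euc d), y⟫ ∂muSph d = 0 := by
  simp only [eval_gw_inner, ← sphMean_apply]
  rw [map_sum]
  refine sum_eq_zero fun k hk => ?_
  have hone : (1 : MvPolynomial (Fin (d + 1)) ℝ) ∈ harmonicPolynomials d 0 := by
    simpa [zonal_zero] using zonal_mem_harmonicPolynomials x 0
  have hk₀ : k ≠ 0 := Nat.one_le_iff_ne_zero.1 (mem_Icc.1 hk).1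
  rw [sphMean_C_mul, ← mul_one (zonal _ k),
    sphMean_mul_eq_zero hd hk₀ (zonal_mem_harmonicPolynomials x k) hone, mul_zero]

lemma weight_mul_sphMean_sum_zonal (hd : 1 ≤ d) (hk : 1 ≤ k) {ι : Type*} [Fintype ι] (c : ι → ℝ)
    (x : ι → Sph d) :
    (k : ℝ) * ((k : ℝ) + d - 1) *
        sphMean d ((∑ i, MvPolynomial.C (c i * gwCoeff d k) * zonal (x i : Euc d) k) *
          ∑ i, MvPolynomial.C (c i * gwCoeff d k) * zonal (x i : Euc d) k) =
      ∑ i, ∑ j, c i * c j *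
        (gwCoeff d k * (gegenbauer (((d : ℝ) - 1) / 2) k).eval ⟪(x i : Euc d), x j⟫) := by
  have hterm (i j : ι) : sphMean d (MvPolynomial.C (c i * gwCoeff d k) * zonal (x i : Euc d) k *
      (MvPolynomial.C (c j * gwCoeff d k) * zonal (x j : Euc d) k)) =
      c i * gwCoeff d k * (c j * gwCoeff d k) * (((d : ℝ) - 1) / (2 * k + d - 1) *
        (gegenbauer (((d : ℝ) - 1) / 2) k).eval ⟪(x i : Euc d), x j⟫) := by
    rw [mul_mul_mul_comm, ← MvPolynomial.C_mul, sphMean_C_mul,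
      sphMean_zonal_mul_zonal hd _ _ (Nat.one_le_iff_ne_zero.1 hk)]
  rw [sum_mul_sum]
  simp only [map_sum, mul_sum, hterm]
  refine sum_congr rfl fun i _ => sum_congr rfl fun j _ => ?_
  linear_combination c i * c j * (gegenbauer (((d : ℝ) - 1) / 2) k).eval ⟪(x i : Euc d), x j⟫ *
    weight_mul_gwCoeff_sq hd hk

lemma innerW_sum_GxFun_self (hd : 1 ≤ d) (n : ℕ) {ι : Type*} [Fintype ι] (c : ι → ℝ)
    (x : ι → Sph d) :
    innerW d n (∑ i, c i • GxFun d n (x i)) (∑ i, c i • GxFun d n (x i)) =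
      ∑ i, ∑ j, c i * c j * (gw d n).eval ⟪(x i : Euc d), x j⟫ := by
  let Z (k : ℕ) : MvPolynomial (Fin (d + 1)) ℝ :=
    ∑ i, MvPolynomial.C (c i * gwCoeff d k) * zonal (x i : Euc d) k
  have hZ (k : ℕ) : Z k ∈ harmonicPolynomials d k := sum_mem fun i _ => by
    rw [MvPolynomial.C_mul']
    exact Submodule.smul_mem _ _ (zonal_mem_harmonicPolynomials (x i) k)
  have hP (y : Sph d) : (∑ i, c i • GxFun d n (x i)) y =
      ∑ k ∈ Icc 1 n, MvPolynomial.eval (fun i => (y : Euc d) i) (Z k) := by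
    simp only [Z, Finset.sum_apply, Pi.smul_apply, smul_eq_mul, GxFun, eval_gw_inner, map_sum,
      map_mul, MvPolynomial.eval_C, mul_sum, mul_assoc]
    exact sum_comm
  rw [innerW_self hd hZ hP, sum_congr rfl fun k hk =>
    weight_mul_sphMean_sum_zonal hd (mem_Icc.1 hk).1 c x, sum_comm]
  refine sum_congr rfl fun i _ => ?_
  rw [sum_comm]
  simp only [eval_gw, mul_sum]

end EnergyKernel

section MainBound

variable {d N : ℕ}

lemma exists_partition_energy_le (hd : 1 ≤ d) (hN : N ≠ 0) {δ : ℝ} (hδ : 0 < δ)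
    (hball : ∀ x : Sph d, (N : ℝ)⁻¹ ≤ (muSph d).real (Metric.ball x (δ / 2))) (n : ℕ) :
    ∃ R : Fin N → Set (Sph d), IsAreaRegularPartition d N R ∧
      ∃ x : Fin N → Sph d, (∀ i, x i ∈ R i) ∧
        ∑ i, ∑ j, (gw d n).eval ⟪(x i : Euc d), x j⟫ ≤
          N * (2 * (d : ℝ) ^ d * (n : ℝ) ^ d * (18 * δ ^ 2)) := by
  have := preconnectedSpace_sph hd
  obtain ⟨R, hclosed, hcover, hdisj, hmeas, hsmall⟩ :=
    exists_area_regular_partition hN hδ (muSph_sphere hd) hball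
  refine ⟨R, ⟨hclosed, hcover, fun i j hij => ?_, fun i => ?_⟩,
    exists_points_energy_le hclosed hcover hdisj hmeas (continuous_eval_gw_inner d n)
      (integral_eval_gw_inner hd n) fun i a ha b hb => ?_⟩
  · exact (isOpen_interior.inter isOpen_interior).eq_empty_of_measure_zero
      (measure_mono_null (Set.inter_subset_inter interior_subset interior_subset) (hdisj hij))
  · rw [← ofReal_measureReal, hmeas i, ENNReal.ofReal_inv_of_pos (by positivity),
      ENNReal.ofReal_natCast, one_div]
  · obtain ⟨c, hc⟩ := hsmall i
    have hdist : dist a b ≤ 6 * δ := by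
      linarith [dist_triangle_right a b c, Metric.mem_closedBall.1 (hc ha),
        Metric.mem_closedBall.1 (hc hb)]
    have hinner : 1 - ⟪(a : Euc d), b⟫ ≤ 18 * δ ^ 2 := by
      rw [one_sub_inner_eq]
      nlinarith [dist_nonneg (x := a) (y := b)]
    have hmem : ⟪(a : Euc d), b⟫ ∈ Set.Icc (-1) 1 := abs_le.1 <| by
      simpa using abs_real_inner_le_norm (a : Euc d) b
    have hself : ⟪(a : Euc d), a⟫ = 1 := by simp
    rw [hself]
    exact (eval_one_sub_eval_gw_le hd n hmem).trans (by gcongr)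

lemma inv_le_muSph_ball (hd : 1 ≤ d) (hN : 1 ≤ N) (x : Sph d) :
    (N : ℝ)⁻¹ ≤ (muSph d).real (Metric.ball x ((16 ^ (d + 1) / N : ℝ) ^ (1 / (d : ℝ)))) := by
  have hpow : ((16 ^ (d + 1) / N : ℝ) ^ (1 / (d : ℝ))) ^ d / 16 ^ (d + 1) = (N : ℝ)⁻¹ := by
    rw [one_div, Real.rpow_inv_natCast_pow (by positivity) (by omega)]
    field_simp
  rw [← hpow]
  refine le_muSph_ball x (by positivity) ?_
  rw [hpow]
  exact inv_le_one_of_one_le₀ (by exact_mod_cast hN)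

lemma normW_inv_smul_sum_GxFun (hd : 1 ≤ d) (n : ℕ) (x : Fin N → Sph d) :
    normW d n ((N : ℝ)⁻¹ • ∑ i, GxFun d n (x i)) =
      √(∑ i, ∑ j, (gw d n).eval ⟪(x i : Euc d), x j⟫) / N := by
  rw [normW, smul_sum, innerW_sum_GxFun_self hd n (fun _ => (N : ℝ)⁻¹)]
  simp only [← mul_sum]
  rw [Real.sqrt_mul (mul_self_nonneg _), Real.sqrt_mul_self (by positivity), inv_mul_eq_div]

lemma sqrt_energy_div {A B n N : ℝ} (hA : 0 ≤ A) (hB : 0 ≤ B) (hn : 0 ≤ n) (hN : 0 < N) (d : ℕ) :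
    √(N * (2 * A * n ^ d * (18 * (2 * (B / N) ^ (1 / (d : ℝ))) ^ 2))) / N =
      12 * √A * B ^ (1 / (d : ℝ)) * n ^ ((d : ℝ) / 2) / N ^ ((1 : ℝ) / 2 + 1 / (d : ℝ)) := by
  have hsqrt_pow : √(n ^ d) = n ^ ((d : ℝ) / 2) := by
    rw [Real.sqrt_eq_rpow, ← Real.rpow_natCast, ← Real.rpow_mul hn, mul_one_div]
  have hfactor : N * (2 * A * n ^ d * (18 * (2 * (B / N) ^ (1 / (d : ℝ))) ^ 2)) =
      N * A * n ^ d * (12 * (B / N) ^ (1 / (d : ℝ))) ^ 2 := by ring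
  rw [hfactor, Real.sqrt_mul (by positivity), Real.sqrt_sq (by positivity),
    Real.sqrt_mul (by positivity), Real.sqrt_mul hN.le, hsqrt_pow, Real.div_rpow hB hN.le,
    Real.rpow_add hN, ← Real.sqrt_eq_rpow]
  field_simp
  rw [Real.sq_sqrt hN.le]
  ring

end MainBound

/-- For every `d ≥ 1` there is `b_d` such that for all `n, N ≥ 1` there are
an area-regular partition `R_1,…,R_N` of `S^d` and points `x_i ∈ R_i` with
`‖(1/N)(G_{x_1}+…+G_{x_N})‖_w ≤ b_d n^{d/2} / N^{1/2+1/d}`. -/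
theorem statement2 (d : ℕ) (hd : 1 ≤ d) :
    ∃ b : ℝ, 0 < b ∧ ∀ n N : ℕ, 1 ≤ n → 1 ≤ N →
      ∃ R : Fin N → Set (Sph d), IsAreaRegularPartition d N R ∧
        ∃ x : Fin N → Sph d, (∀ i, x i ∈ R i) ∧
          normW d n ((N : ℝ)⁻¹ • ∑ i, GxFun d n (x i : Euc d)) ≤
            b * (n : ℝ) ^ ((d : ℝ) / 2) / (N : ℝ) ^ ((1 : ℝ) / 2 + 1 / (d : ℝ)) := by
  refine ⟨12 * √((d : ℝ) ^ d) * (16 ^ (d + 1)) ^ (1 / (d : ℝ)), by positivity, fun n N _ hN => ?_⟩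
  set r : ℝ := (16 ^ (d + 1) / N : ℝ) ^ (1 / (d : ℝ)) with hr
  have hball (y : Sph d) : (N : ℝ)⁻¹ ≤ (muSph d).real (Metric.ball y (2 * r / 2)) := by
    rw [mul_div_cancel_left₀ r two_ne_zero]
    exact inv_le_muSph_ball hd hN y
  obtain ⟨R, hR, x, hxR, henergy⟩ :=
    exists_partition_energy_le hd (Nat.one_le_iff_ne_zero.1 hN) (by positivity) hball n
  refine ⟨R, hR, x, hxR, ?_⟩
  rw [normW_inv_smul_sum_GxFun hd,
    ← sqrt_energy_div (by positivity) (by positivity) (by positivity) (by positivity), ← hr]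
  gcongr
end
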